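/- arXiv:1501.03377 — 7 statements merged into one kernel-verified Lean document; each statement's English description precedes it below -/
import Mathlib

section
/- Let (G,x,y) encode a reflexive regular map that is simple and has density exceeding 1/2 (i.e. 2q² > |G|). Then either (G,x,y) is the tetrahedral map tet, or there exists n ≥ 1 such that (G,x,y) is the Fermat map Fer(n). -/
namespace RegularMap

variable {G : Type*} [Group G]

/-- The vertex set of the map: left cosets of the cyclic subgroup generated by `y`. -/
abbrev Vertex (y : G) : Type _ := G ⧸ Subgroup.zpowers y

/-- The rotation about the vertex `v = g⟨y⟩`, namely `g * y * g⁻¹`. -/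
def rot (y : G) (v : Vertex y) : G :=
  Quotient.liftOn' v (fun g => g * y * g⁻¹) (by
    intro a b h
    obtain ⟨k, hk⟩ := QuotientGroup.leftRel_apply.mp h
    have hk' : y ^ k = a⁻¹ * b := hk
    have hb : b = a * y ^ k := by rw [hk']; group
    subst hb
    group)

/-- Two vertices are adjacent iff they are distinct and form the endpoint pair of
some edge `g⟨x*y⟩`, whose endpoints are `g⟨y⟩` and `g*x*y⟨y⟩`. -/
def Adj (x y : G) (v w : Vertex y) : Prop :=
  v ≠ w ∧ ∃ g : G,
    ({v, w} : Set (Vertex y)) = {QuotientGroup.mk g, QuotientGroup.mk (g * x * y)}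

/-- The map is simple: no edge has equal endpoints, and distinct edges (left cosets
of `⟨x*y⟩`) have distinct endpoint pairs. -/
def IsSimple (x y : G) : Prop :=
  (∀ g : G, (QuotientGroup.mk g : Vertex y) ≠ QuotientGroup.mk (g * x * y)) ∧
  ∀ g h : G,
    ({QuotientGroup.mk g, QuotientGroup.mk (g * x * y)} : Set (Vertex y)) =
      {QuotientGroup.mk h, QuotientGroup.mk (h * x * y)} →
    (QuotientGroup.mk g : G ⧸ Subgroup.zpowers (x * y)) = QuotientGroup.mk h

/-- The map is reflexive: some group automorphism inverts both `x` and `y`. -/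
def IsReflexive (x y : G) : Prop :=
  ∃ σ : G ≃* G, σ x = x⁻¹ ∧ σ y = y⁻¹

/-- An automorphism of the map (given a reflection σ): either orientation preserving,
`g⟨y⟩ ↦ a*g⟨y⟩`, or orientation reversing, `g⟨y⟩ ↦ a*σ(g)⟨y⟩`. -/
def IsMapAut (y : G) (σ : G ≃* G) (φ : Vertex y → Vertex y) : Prop :=
  (∃ a : G, ∀ g : G, φ (QuotientGroup.mk g) = QuotientGroup.mk (a * g)) ∨
  (∃ a : G, ∀ g : G, φ (QuotientGroup.mk g) = QuotientGroup.mk (a * σ g))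

/-- `v'` is a diagonal neighbour of `v`: `v' = S_w² • v` for some vertex `w` adjacent to `v`. -/
def DiagNeighbor (x y : G) (v v' : Vertex y) : Prop :=
  ∃ w : Vertex y, Adj x y v w ∧ v' = rot y w ^ 2 • v

/-- Diagonal alignment: the reflexive-transitive closure of the diagonal-neighbour relation. -/
def Aligned (x y : G) : Vertex y → Vertex y → Prop :=
  Relation.ReflTransGen (DiagNeighbor x y)

/-- The primitive period `J`: the least `j ≥ 1` such that `S_v^j` fixes every vertex
diagonally aligned with `v` (this is independent of `v`). -/
noncomputable def primPeriod (x y : G) : ℕ :=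
  sInf {j : ℕ | 1 ≤ j ∧ ∀ v v' : Vertex y, Aligned x y v v' → rot y v ^ j • v' = v'}

/-- The even period `T = lcm(J, 2)`. -/
noncomputable def evenPeriod (x y : G) : ℕ := Nat.lcm (primPeriod x y) 2

/-- Relators of the tetrahedral group ⟨X,Y ∣ X³, Y³, (XY)²⟩. -/
def tetRels : Set (FreeGroup (Fin 2)) :=
  {FreeGroup.of 0 ^ 3, FreeGroup.of 1 ^ 3, (FreeGroup.of 0 * FreeGroup.of 1) ^ 2}

/-- Relators of the Fermat group ⟨X,Y ∣ X³, Y^(2n), (XY)², [X,Y]³⟩. -/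
def fermatRels (n : ℕ) : Set (FreeGroup (Fin 2)) :=
  {FreeGroup.of 0 ^ 3, FreeGroup.of 1 ^ (2 * n), (FreeGroup.of 0 * FreeGroup.of 1) ^ 2,
    (FreeGroup.of 0 * FreeGroup.of 1 * (FreeGroup.of 0)⁻¹ * (FreeGroup.of 1)⁻¹) ^ 3}

/-- `(G,x,y)` is the tetrahedral map: the canonical homomorphism from the presented
group ⟨X,Y ∣ X³, Y³, (XY)²⟩ sending X to x and Y to y is an isomorphism. -/
def IsTet (G : Type*) [Group G] (x y : G) : Prop :=
  ∃ e : PresentedGroup tetRels ≃* G,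
    e (PresentedGroup.of 0) = x ∧ e (PresentedGroup.of 1) = y

/-- `(G,x,y)` is the Fermat map `Fer(n)`: the canonical homomorphism from the Fermat
group `G_n` sending X to x and Y to y is an isomorphism. -/
def IsFermat (n : ℕ) (G : Type*) [Group G] (x y : G) : Prop :=
  ∃ e : PresentedGroup (fermatRels n) ≃* G,
    e (PresentedGroup.of 0) = x ∧ e (PresentedGroup.of 1) = y

section Helpers

/-- A generation principle: a set containing 1 and stable under left multiplication by
`Y` (of finite order) and the involution `X*Y` is everything. -/
theorem gen_all {K : Type*} [Group K] (X Y : K) (hgen : Subgroup.closure {X, Y} = ⊤)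
    (m : ℕ) (hm : 0 < m) (hY : Y ^ m = 1) (hE : (X * Y) * (X * Y) = 1)
    (S : K → Prop) (h1 : S 1) (hSY : ∀ g, S g → S (Y * g)) (hSE : ∀ g, S g → S (X * Y * g)) :
    ∀ g, S g := by
  have hpow : ∀ (k : ℕ) g, S g → S (Y ^ k * g) := by
    intro k
    induction k with
    | zero => intro g hg; simpa using hg
    | succ k ih =>
      intro g hg
      rw [pow_succ, mul_assoc]
      exact ih _ (hSY _ hg)
  have hinv : Y⁻¹ = Y ^ (m - 1) := by
    rw [inv_eq_iff_mul_eq_one, ← pow_succ', Nat.sub_add_cancel hm, hY]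
  have hSYi : ∀ g, S g → S (Y⁻¹ * g) := by
    intro g hg; rw [hinv]; exact hpow _ _ hg
  have hX : X = X * Y * Y⁻¹ := by group
  have hEi : (X * Y)⁻¹ = X * Y := inv_eq_of_mul_eq_one_left hE
  have hXi : X⁻¹ = Y * (X * Y) := by
    rw [← hEi]; group
  intro g
  have hg : g ∈ Subgroup.closure {X, Y} := by rw [hgen]; trivial
  induction hg using Subgroup.closure_induction_left with
  | one => exact h1
  | mul_left a ha b hb ih =>
    rcases ha with rfl | rfl
    · have := hSE _ (hSYi _ ih)
      rwa [← mul_assoc, ← hX] at this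
    · exact hSY _ ih
  | inv_mul_cancel a ha b hb ih =>
    rcases ha with rfl | rfl
    · rw [hXi, mul_assoc]; exact hSY _ (hSE _ ih)
    · exact hSYi _ ih

theorem conjrel {K : Type*} [Group K] (X Y : K) (h3 : X ^ 3 = 1) (hE : (X * Y) * (X * Y) = 1) :
    X * Y * Y * (X * Y) = Y⁻¹ * (X * Y) * Y⁻¹ := by
  have h4 : X * Y * X = Y⁻¹ := by
    rw [eq_inv_iff_mul_eq_one]; simpa [mul_assoc] using hE
  have h6 : Y * X * Y = X⁻¹ := by
    rw [eq_inv_iff_mul_eq_one, ← mul_left_inj X⁻¹, ← mul_right_inj X]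
    simpa [mul_assoc] using hE
  have h5 : X⁻¹ = X * X := by
    rw [inv_eq_iff_mul_eq_one, ← h3]; simp [pow_succ, mul_assoc]
  calc X * Y * Y * (X * Y) = X * Y * (Y * X * Y) := by group
    _ = X * Y * X * X := by rw [h6, h5]; group
    _ = Y⁻¹ * X := by rw [h4]
    _ = _ := by group

theorem tet_card {K : Type*} [Group K] (X Y : K) (hgen : Subgroup.closure {X, Y} = ⊤)
    (h3 : X ^ 3 = 1) (hY : Y ^ 3 = 1) (hxy : (X * Y) ^ 2 = 1) :
    Finite K ∧ Nat.card K ≤ 12 := by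
  have hE : (X * Y) * (X * Y) = 1 := by rw [← pow_two, hxy]
  have hc := conjrel X Y h3 hE
  have hEi : (X * Y)⁻¹ = X * Y := inv_eq_of_mul_eq_one_left hE
  have hc' : X * Y * Y⁻¹ * (X * Y) = Y * (X * Y) * Y := by
    have := congrArg (·⁻¹) hc
    simp only [mul_inv_rev, inv_inv] at this
    rw [← mul_inv_rev X Y, hEi] at this
    simpa [mul_assoc] using this
  generalize hEE : X * Y = E at *
  let Z := Subgroup.zpowers Y
  have hfo : IsOfFinOrder Y := isOfFinOrder_iff_pow_eq_one.2 ⟨3, by norm_num, hY⟩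
  have : Finite Z := finite_zpowers.mpr hfo
  have hZ : Nat.card Z ≤ 3 := by
    rw [Nat.card_zpowers]; exact orderOf_le_of_pow_eq_one (by norm_num) hY
  have hYZ : Y ∈ Z := Subgroup.mem_zpowers Y
  have hZ3 : ∀ a ∈ Z, a = 1 ∨ a = Y ∨ a = Y⁻¹ := by
    intro a ha
    obtain ⟨k, rfl⟩ := hfo.mem_powers_iff_mem_zpowers.2 ha
    have : Y ^ k = Y ^ (k % 3) := by
      conv_lhs => rw [← Nat.div_add_mod k 3, pow_add, pow_mul, hY, one_pow, one_mul]
    have h2 : k % 3 < 3 := Nat.mod_lt _ (by norm_num)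
    simp only [this]
    interval_cases h : k % 3
    · simp
    · simp
    · right; right
      rw [eq_inv_iff_mul_eq_one, ← pow_succ, hY]
  let f : Z ⊕ (Z × Z) → K := Sum.elim (fun a => a) (fun p => p.1 * E * p.2)
  have hf : Function.Surjective f := by
    apply gen_all X Y hgen 3 (by norm_num) hY (by rw [hEE]; exact hE)
    · exact ⟨.inl 1, by simp [f]⟩
    · rintro _ ⟨a | ⟨a, b⟩, rfl⟩
      · exact ⟨.inl (⟨Y, hYZ⟩ * a), by simp [f]⟩
      · exact ⟨.inr (⟨Y, hYZ⟩ * a, b), by simp [f, mul_assoc]⟩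
    · rw [hEE]
      rintro _ ⟨a | ⟨⟨a, ha⟩, b⟩, rfl⟩
      · exact ⟨.inr (1, a), by simp [f]⟩
      · rcases hZ3 a ha with rfl | rfl | rfl
        · exact ⟨.inl b, by simp [f, ← mul_assoc, hE]⟩
        · refine ⟨.inr (⟨a, ha⟩⁻¹, ⟨a, ha⟩⁻¹ * b), ?_⟩
          simp only [f, Sum.elim_inr, ← mul_assoc, hc]
          simp [mul_assoc]
        · refine ⟨.inr (⟨Y, hYZ⟩, ⟨Y, hYZ⟩ * b), ?_⟩
          simp only [f, Sum.elim_inr, ← mul_assoc, hc']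
          simp [mul_assoc]
  refine ⟨Finite.of_surjective f hf, (Nat.card_le_card_of_surjective f hf).trans ?_⟩
  rw [Nat.card_sum, Nat.card_prod]
  nlinarith

theorem fermat_card {K : Type*} [Group K] (X Y : K) (hgen : Subgroup.closure {X, Y} = ⊤)
    (n : ℕ) (hn : 1 ≤ n)
    (h3 : X ^ 3 = 1) (hY : Y ^ (2 * n) = 1) (hxy : (X * Y) ^ 2 = 1)
    (hcomm : (X * Y * X⁻¹ * Y⁻¹) ^ 3 = 1) :
    Finite K ∧ Nat.card K ≤ 6 * n ^ 2 := by
  have hE : (X * Y) * (X * Y) = 1 := by rw [← pow_two, hxy]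
  have hc := conjrel X Y h3 hE
  have hEi : (X * Y)⁻¹ = X * Y := inv_eq_of_mul_eq_one_left hE
  have hc' : X * Y * Y⁻¹ * (X * Y) = Y * (X * Y) * Y := by
    have := congrArg (·⁻¹) hc
    simp only [mul_inv_rev, inv_inv] at this
    rw [← mul_inv_rev X Y, hEi] at this
    simpa [mul_assoc] using this
  have hXE : X = X * Y * Y⁻¹ := by group
  have hcomm2 : X * Y * X⁻¹ * Y⁻¹ = Y⁻¹ * (X * Y) * Y⁻¹ * Y⁻¹ := by
    rw [← hc]
    have : X⁻¹ = Y * (X * Y) := by rw [← hEi]; group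
    rw [this]; group
  rw [hcomm2] at hcomm
  generalize hEE : X * Y = E at *
  clear hcomm2 hXE
  -- `E Y³ E = Y⁻³ E Y⁻³`
  have hc3 : E * Y ^ 3 * E = (Y ^ 3)⁻¹ * E * (Y ^ 3)⁻¹ := by
    have h7 : E * (Y ^ 3)⁻¹ * E * (Y ^ 3)⁻¹ * E * (Y ^ 3)⁻¹ = 1 := by
      calc _ = Y * (Y⁻¹ * E * Y⁻¹ * Y⁻¹) ^ 3 * Y⁻¹ := by simp [pow_succ, mul_assoc]
        _ = 1 := by rw [hcomm]; group
    have h8 : E * (Y ^ 3)⁻¹ * E = (E * (Y ^ 3)⁻¹ * E * (Y ^ 3)⁻¹ * E * (Y ^ 3)⁻¹) *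
        (Y ^ 3 * E⁻¹ * Y ^ 3) := by group
    rw [h7, hEi, one_mul] at h8
    have := congrArg (·⁻¹) h8
    simp only [mul_inv_rev, inv_inv, hEi] at this
    simpa [mul_assoc] using this
  obtain ⟨a, ha⟩ : ∃ a, a = Y ^ 2 := ⟨_, rfl⟩
  obtain ⟨b, hb⟩ : ∃ b, b = E * Y ^ 2 * E := ⟨_, rfl⟩
  have hb1 : b = Y⁻¹ * E * (Y ^ 2)⁻¹ * E * Y⁻¹ := by
    calc b = (E * Y) * 1 * (Y * E) := by rw [hb]; simp [pow_succ, mul_assoc]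
      _ = (E * Y * E) * (E * Y * E) := by rw [← hE]; group
      _ = _ := by rw [hc]; group
  have hb2 : b = (Y ^ 3)⁻¹ * E * (Y ^ 2)⁻¹ * E * Y := by
    calc b = (E * Y ^ 3) * 1 * Y⁻¹ * E := by rw [hb]; group
      _ = (E * Y ^ 3 * E) * (E * Y⁻¹ * E) := by rw [← hE]; group
      _ = _ := by rw [hc3, hc']; group
  have hab : Commute a b := by
    have : b = a⁻¹ * b * a := by
      conv_lhs => rw [hb2]
      rw [hb1, ha]; group
    change a * b = b * a
    conv_lhs => rw [this]
    group
  have hYb : Y * b = a⁻¹ * b⁻¹ * Y := by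
    have hbi : b⁻¹ = E * (Y ^ 2)⁻¹ * E := by
      rw [hb]; simp only [mul_inv_rev, hEi, mul_assoc]
    have : a⁻¹ * b⁻¹ = b⁻¹ * a⁻¹ := (hab.inv_inv).eq
    rw [this, hbi, hb1, ha]; group
  have hEa : E * a = b * E := by
    rw [hb, ha, mul_assoc (E * Y ^ 2), hE, mul_one]
  have hEb : E * b = a * E := by
    rw [hb, ha, ← mul_assoc, ← mul_assoc, hE, one_mul]
  have hYbj : ∀ j : ℤ, Y * b ^ j = a ^ (-j) * b ^ (-j) * Y := by
    intro j
    have h : SemiconjBy Y b (a⁻¹ * b⁻¹) := hYb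
    have h2 := (h.zpow_right j).eq
    rw [h2, (hab.inv_inv).mul_zpow, inv_zpow', inv_zpow']
  have hYai : ∀ i : ℤ, Y * a ^ i = a ^ i * Y := by
    intro i
    have h : Commute Y a := by rw [ha]; exact Commute.self_pow Y 2
    exact (h.zpow_right i).eq
  have hEaj : ∀ j : ℤ, E * a ^ j = b ^ j * E := fun j =>
    (SemiconjBy.zpow_right (show SemiconjBy E a b from hEa) j).eq
  have hEbj : ∀ j : ℤ, E * b ^ j = a ^ j * E := fun j =>
    (SemiconjBy.zpow_right (show SemiconjBy E b a from hEb) j).eq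
  have hYs : ∀ (i j : ℤ) s, Y * (a ^ i * b ^ j * s) = a ^ (i - j) * b ^ (-j) * (Y * s) := by
    intro i j s
    calc _ = (Y * a ^ i) * b ^ j * s := by group
      _ = a ^ i * (Y * b ^ j) * s := by rw [hYai]; group
      _ = _ := by rw [hYbj, sub_eq_add_neg, zpow_add]; simp only [mul_assoc]
  have hEs : ∀ (i j : ℤ) s, E * (a ^ i * b ^ j * s) = a ^ j * b ^ i * (E * s) := by
    intro i j s
    calc _ = (E * a ^ i) * b ^ j * s := by group
      _ = b ^ i * (E * b ^ j) * s := by rw [hEaj]; group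
      _ = (b ^ i * a ^ j) * (E * s) := by rw [hEbj]; group
      _ = _ := by rw [((hab.zpow_zpow j i).symm).eq]
  have hmm : ∀ (i j k l : ℤ) s, a ^ i * b ^ j * (a ^ k * b ^ l * s) =
      a ^ (i + k) * b ^ (j + l) * s := by
    intro i j k l s
    calc _ = a ^ i * (b ^ j * a ^ k) * (b ^ l * s) := by group
      _ = _ := by rw [((hab.zpow_zpow k j).symm).eq, zpow_add, zpow_add]; simp only [mul_assoc]
  let r : Fin 6 → K := ![1, Y, E, E * Y, Y * E, E * Y * E]
  -- multiplication tables
  have tY : ∀ t : Fin 6, ∃ (k l : ℤ) (u : Fin 6), Y * r t = a ^ k * b ^ l * r u := by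
    intro t
    fin_cases t
    · exact ⟨0, 0, 1, by simp [r]⟩
    · exact ⟨1, 0, 0, by simp [r, ha, pow_two]⟩
    · exact ⟨0, 0, 4, by simp [r]⟩
    · refine ⟨0, -1, 5, ?_⟩
      simp only [r]
      simp only [Fin.reduceFinMk, Matrix.cons_val, zpow_zero, one_mul]
      rw [← mul_assoc, ← hc', zpow_neg_one, hb]
      simp only [mul_inv_rev, hEi]
      calc E * Y⁻¹ * E = E * (Y ^ 2)⁻¹ * 1 * Y * E := by group
        _ = _ := by rw [← hE]; group
    · exact ⟨1, 0, 2, by simp [r, ha, pow_two, mul_assoc]⟩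
    · refine ⟨0, -1, 3, ?_⟩
      simp only [r]
      simp only [Fin.reduceFinMk, Matrix.cons_val, zpow_zero, one_mul]
      rw [hc, zpow_neg_one, hb]
      simp only [mul_inv_rev, hEi]
      calc Y * (Y⁻¹ * E * Y⁻¹) = E * (Y ^ 2)⁻¹ * 1 * Y := by group
        _ = _ := by rw [← hE]; group
  have tE : ∀ t : Fin 6, ∃ (k l : ℤ) (u : Fin 6), E * r t = a ^ k * b ^ l * r u := by
    intro t
    fin_cases t
    · exact ⟨0, 0, 2, by simp [r]⟩
    · exact ⟨0, 0, 3, by simp [r]⟩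
    · exact ⟨0, 0, 0, by simp [r, hE]⟩
    · exact ⟨0, 0, 1, by simp [r, ← mul_assoc, hE]⟩
    · exact ⟨0, 0, 5, by simp [r, mul_assoc]⟩
    · exact ⟨0, 0, 4, by simp [r, ← mul_assoc, hE]⟩
  have hall : ∀ g : K, ∃ (i j : ℤ) (t : Fin 6), g = a ^ i * b ^ j * r t := by
    apply gen_all X Y hgen (2 * n) (by omega) hY (by rw [hEE]; exact hE)
    · exact ⟨0, 0, 0, by simp [r]⟩
    · rintro _ ⟨i, j, t, rfl⟩
      obtain ⟨k, l, u, h⟩ := tY t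
      exact ⟨_, _, u, by rw [hYs, h, hmm]⟩
    · rw [hEE]
      rintro _ ⟨i, j, t, rfl⟩
      obtain ⟨k, l, u, h⟩ := tE t
      exact ⟨_, _, u, by rw [hEs, h, hmm]⟩
  have han : a ^ n = 1 := by rw [ha, ← pow_mul, hY]
  have hbn : b ^ n = 1 := by
    have h : SemiconjBy E a b := hEa
    have h2 := (h.pow_right n).eq
    rw [han, mul_one] at h2
    simpa using h2.symm
  have fa : IsOfFinOrder a := isOfFinOrder_iff_pow_eq_one.2 ⟨n, hn, han⟩
  have fb : IsOfFinOrder b := isOfFinOrder_iff_pow_eq_one.2 ⟨n, hn, hbn⟩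
  have : Finite (Subgroup.zpowers a) := finite_zpowers.mpr fa
  have : Finite (Subgroup.zpowers b) := finite_zpowers.mpr fb
  have ca : Nat.card (Subgroup.zpowers a) ≤ n := by
    rw [Nat.card_zpowers]; exact orderOf_le_of_pow_eq_one hn han
  have cb : Nat.card (Subgroup.zpowers b) ≤ n := by
    rw [Nat.card_zpowers]; exact orderOf_le_of_pow_eq_one hn hbn
  let f : (Subgroup.zpowers a × Subgroup.zpowers b) × Fin 6 → K :=
    fun p => p.1.1 * p.1.2 * r p.2
  have hf : Function.Surjective f := by
    intro g
    obtain ⟨i, j, t, rfl⟩ := hall g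
    exact ⟨((⟨a ^ i, i, rfl⟩, ⟨b ^ j, j, rfl⟩), t), rfl⟩
  refine ⟨Finite.of_surjective f hf, (Nat.card_le_card_of_surjective f hf).trans ?_⟩
  rw [Nat.card_prod, Nat.card_prod, Nat.card_eq_fintype_card (α := Fin 6), Fintype.card_fin]
  have := Nat.mul_le_mul ca cb
  nlinarith

end Helpers

section Main

theorem mem_zpowers_of_orderOf_eq {G : Type*} [Group G] [Finite G] {y h k : G}
    (hh : h ∈ Subgroup.zpowers y) (hk : k ∈ Subgroup.zpowers y) (ho : orderOf h = orderOf k) :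
    k ∈ Subgroup.zpowers h := by
  rw [← mem_powers_iff_mem_zpowers] at hh hk
  obtain ⟨i, rfl⟩ := hh
  obtain ⟨j, rfl⟩ := hk
  simp only at ho ⊢
  rw [orderOf_pow, orderOf_pow] at ho
  have hq : 0 < orderOf y := orderOf_pos y
  have hg : (orderOf y).gcd i = (orderOf y).gcd j := by
    have h1 := Nat.div_mul_cancel (Nat.gcd_dvd_left (orderOf y) i)
    have h2 := Nat.div_mul_cancel (Nat.gcd_dvd_left (orderOf y) j)
    rw [← ho] at h2
    have h3 : 0 < orderOf y / (orderOf y).gcd i := by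
      apply Nat.pos_of_ne_zero; intro h0; rw [h0] at h1; omega
    exact Nat.eq_of_mul_eq_mul_left h3 (h1.trans h2.symm)
  have hd : y ^ ((orderOf y).gcd i) ∈ Subgroup.zpowers (y ^ i) := by
    have hb := Nat.gcd_eq_gcd_ab (orderOf y) i
    refine ⟨(orderOf y).gcdB i, ?_⟩
    have : y ^ (((orderOf y).gcd i : ℕ) : ℤ) = (y ^ i) ^ ((orderOf y).gcdB i) := by
      rw [hb, zpow_add, zpow_mul, zpow_natCast, pow_orderOf_eq_one, one_zpow, one_mul, zpow_mul,
        zpow_natCast]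
    rw [zpow_natCast] at this
    exact this.symm
  obtain ⟨c, hc⟩ : (orderOf y).gcd i ∣ j := by rw [hg]; exact Nat.gcd_dvd_right _ _
  rw [hc, pow_mul]
  exact pow_mem hd c

theorem isoOf {G : Type*} [Group G] [Finite G] (x y : G)
    (hgen : Subgroup.closure {x, y} = ⊤) (rels : Set (FreeGroup (Fin 2)))
    (hr : ∀ r ∈ rels, FreeGroup.lift ![x, y] r = 1)
    (hfin : Finite (PresentedGroup rels)) (hcard : Nat.card (PresentedGroup rels) ≤ Nat.card G) :
    ∃ e : PresentedGroup rels ≃* G,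
      e (PresentedGroup.of 0) = x ∧ e (PresentedGroup.of 1) = y := by
  let φ : PresentedGroup rels →* G := PresentedGroup.toGroup hr
  have h0 : φ (PresentedGroup.of 0) = x := by simp [φ]
  have h1 : φ (PresentedGroup.of 1) = y := by simp [φ]
  have hs : Function.Surjective φ := by
    rw [← MonoidHom.range_eq_top, eq_top_iff, ← hgen, Subgroup.closure_le]
    rintro z (rfl | rfl)
    · exact ⟨_, h0⟩
    · exact ⟨_, h1⟩
  have hb : Function.Bijective φ :=
    (Nat.bijective_iff_surjective_and_card φ).2
      ⟨hs, le_antisymm hcard (Nat.card_le_card_of_surjective φ hs)⟩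
  exact ⟨MulEquiv.ofBijective φ hb, h0, h1⟩

theorem presented_gen (rels : Set (FreeGroup (Fin 2))) :
    Subgroup.closure {(PresentedGroup.of 0 : PresentedGroup rels), PresentedGroup.of 1} = ⊤ := by
  rw [← PresentedGroup.closure_range_of rels]
  congr 1
  ext z
  simp [Fin.exists_fin_two, eq_comm]

theorem presented_rel (rels : Set (FreeGroup (Fin 2))) {r : FreeGroup (Fin 2)} (h : r ∈ rels) :
    PresentedGroup.mk rels r = 1 := by
  exact PresentedGroup.one_of_mem h


/-- The core of the argument, in terms of `y` and the edge involution `e`. -/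
theorem core {G : Type*} [Group G] [Finite G] (y e : G) (he : e * e = 1)
    (τ : G →* G) (hτe : τ e = e) (hτy : τ y = y⁻¹)
    (heH : e ∉ Subgroup.zpowers y)
    (hF : ∀ a ∈ Subgroup.zpowers y, e * a * e ∈ Subgroup.zpowers y → a = 1)
    (hden : Nat.card G < 2 * orderOf y ^ 2) :
    e * y * e = y⁻¹ * e * y⁻¹ ∧
    (y ^ 3 = 1 ∨ (2 ∣ orderOf y ∧ 3 * (orderOf y / 2 * orderOf y) ≤ Nat.card G ∧
      e * y ^ 3 * e = (y ^ 3)⁻¹ * e * (y ^ 3)⁻¹)) := by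
  have hei : e⁻¹ = e := inv_eq_of_mul_eq_one_left he
  obtain ⟨H, hH⟩ : ∃ H, H = Subgroup.zpowers y := ⟨_, rfl⟩
  rw [← hH] at hF heH
  have hyH : y ∈ H := by rw [hH]; exact Subgroup.mem_zpowers y
  have hcH : Nat.card H = orderOf y := by rw [hH, Nat.card_zpowers]
  have hcomm : ∀ a ∈ H, ∀ b ∈ H, a * b = b * a := by
    intro a ha b hb
    rw [hH] at ha hb
    obtain ⟨i, rfl⟩ := ha
    obtain ⟨j, rfl⟩ := hb
    exact zpow_mul_comm y i j
  have hτH : ∀ a ∈ H, τ a = a⁻¹ := by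
    intro a ha
    rw [hH] at ha
    obtain ⟨i, rfl⟩ := ha
    simp [hτy]
  have hee : ∀ z, e * (e * z) = z := by intro z; rw [← mul_assoc, he, one_mul]
  -- injectivity of `(a,b) ↦ a e b`
  have inj : ∀ a ∈ H, ∀ b ∈ H, ∀ a' ∈ H, ∀ b' ∈ H, a * e * b = a' * e * b' → a = a' ∧ b = b' := by
    intro a ha b hb a' ha' b' hb' h
    have h1 : e * (a'⁻¹ * a) * e = b' * b⁻¹ := by
      calc e * (a'⁻¹ * a) * e = e * a'⁻¹ * (a * e * b) * b⁻¹ := by group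
        _ = e * e * (b' * b⁻¹) := by rw [h]; group
        _ = _ := by rw [he, one_mul]
    have h2 := hF _ (mul_mem (inv_mem ha') ha) (by rw [h1]; exact mul_mem hb' (inv_mem hb))
    have h3 : a = a' := by rw [inv_mul_eq_one] at h2; exact h2.symm
    subst h3
    exact ⟨rfl, mul_left_cancel h⟩
  -- F1
  have F1 : ∃ a ∈ H, ∃ b ∈ H, ∃ c ∈ H, e * a * e = b * e * c := by
    by_contra! hno
    let f : (H × H) ⊕ (H × H) → G :=
      Sum.elim (fun p => p.1 * e * p.2) (fun p => e * (p.1 * e * p.2))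
    have hf : Function.Injective f := by
      apply Function.Injective.sumElim
      · rintro ⟨⟨a, ha⟩, b, hb⟩ ⟨⟨a', ha'⟩, b', hb'⟩ h
        obtain ⟨rfl, rfl⟩ := inj a ha b hb a' ha' b' hb' h
        rfl
      · rintro ⟨⟨a, ha⟩, b, hb⟩ ⟨⟨a', ha'⟩, b', hb'⟩ h
        obtain ⟨rfl, rfl⟩ := inj a ha b hb a' ha' b' hb' (mul_left_cancel h)
        rfl
      · rintro ⟨⟨a, ha⟩, b, hb⟩ ⟨⟨a', ha'⟩, b', hb'⟩ h
        apply hno a' ha' a ha (b * b'⁻¹) (mul_mem hb (inv_mem hb'))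
        have h : a * e * b = e * (a' * e * b') := h
        rw [← mul_assoc, h]; group
    have := Nat.card_le_card_of_injective f hf
    rw [Nat.card_sum, Nat.card_prod, hcH] at this
    nlinarith
  -- F2 + F4
  have F4 : ∀ g : G, (¬ ∃ b ∈ H, ∃ c ∈ H, g = b * e * c) →
      ∃ N : Subgroup G, y ∈ N ∧ g ∈ N ∧ e ∉ N := by
    intro g hg
    have hex : ∃ h ∈ H, ∃ h' ∈ H, h = g * h' * g⁻¹ ∧ h ≠ 1 := by
      by_contra! hno
      let f : (H × H) ⊕ (H × H) → G :=
        Sum.elim (fun p => p.1 * e * p.2) (fun p => p.1 * g * p.2)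
      have hf : Function.Injective f := by
        apply Function.Injective.sumElim
        · rintro ⟨⟨a, ha⟩, b, hb⟩ ⟨⟨a', ha'⟩, b', hb'⟩ h
          obtain ⟨rfl, rfl⟩ := inj a ha b hb a' ha' b' hb' h
          rfl
        · rintro ⟨⟨a, ha⟩, b, hb⟩ ⟨⟨a', ha'⟩, b', hb'⟩ h
          have h : a * g * b = a' * g * b' := h
          have h2 := hno (a'⁻¹ * a) (mul_mem (inv_mem ha') ha) (b' * b⁻¹)
            (mul_mem hb' (inv_mem hb)) (by
              calc a'⁻¹ * a = a'⁻¹ * (a * g * b) * b⁻¹ * g⁻¹ := by group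
                _ = _ := by rw [h]; group)
          have h3 : a = a' := by rw [inv_mul_eq_one] at h2; exact h2.symm
          subst h3
          have h4 : b = b' := mul_left_cancel h
          subst h4
          rfl
        · rintro ⟨⟨a, ha⟩, b, hb⟩ ⟨⟨a', ha'⟩, b', hb'⟩ h
          have h : a * e * b = a' * g * b' := h
          apply hg
          refine ⟨a'⁻¹ * a, mul_mem (inv_mem ha') ha, b * b'⁻¹, mul_mem hb (inv_mem hb'), ?_⟩
          calc g = a'⁻¹ * (a' * g * b') * b'⁻¹ := by group
            _ = _ := by rw [← h]; group
      have := Nat.card_le_card_of_injective f hf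
      rw [Nat.card_sum, Nat.card_prod, hcH] at this
      nlinarith
    obtain ⟨h, hh, h', hh', hgh, hne⟩ := hex
    have ho : orderOf h = orderOf h' := by
      have : h = MulAut.conj g h' := by rw [MulAut.conj_apply, hgh]
      rw [this, MulEquiv.orderOf_eq]
    have hz : Subgroup.zpowers h = Subgroup.zpowers h' := by
      rw [hH] at hh hh'
      apply le_antisymm
      · rw [Subgroup.zpowers_le]; exact mem_zpowers_of_orderOf_eq hh' hh ho.symm
      · rw [Subgroup.zpowers_le]; exact mem_zpowers_of_orderOf_eq hh hh' ho
    have hzH : Subgroup.zpowers h ≤ H := by rw [Subgroup.zpowers_le]; exact hh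
    have key : ∀ u, u * h' * u⁻¹ ∈ Subgroup.zpowers h → orderOf h = orderOf (u * h' * u⁻¹) →
        u ∈ Subgroup.normalizer (Subgroup.zpowers h : Set G) := by
      intro u hu ho'
      rw [Subgroup.mem_normalizer_iff_map_conj_eq]
      conv_lhs => rw [hz]
      rw [MonoidHom.map_zpowers]
      apply le_antisymm
      · rw [Subgroup.zpowers_le]; simpa using hu
      · rw [Subgroup.zpowers_le]
        have h1 := mem_zpowers_of_orderOf_eq hu (Subgroup.mem_zpowers h) ho'.symm
        simpa using h1
    refine ⟨Subgroup.normalizer (Subgroup.zpowers h : Set G), ?_, ?_, ?_⟩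
    · have : y * h' * y⁻¹ = h' := by rw [hcomm y hyH h' hh']; group
      apply key
      · rw [this, hz]; exact Subgroup.mem_zpowers h'
      · rw [this, ho]
    · apply key
      · rw [← hgh]; exact Subgroup.mem_zpowers h
      · rw [← hgh]
    · intro hen
      apply hne
      apply hF h hh
      apply hzH
      have := (Subgroup.mem_normalizer_iff.1 hen h).1 (Subgroup.mem_zpowers h)
      rwa [hei] at this
  -- F3
  have F3a : ∀ a ∈ H, ∀ b ∈ H, ∀ c ∈ H, e * a * e = b * e * c → b = c := by
    intro a ha b hb c hc h
    have h1 := congrArg (fun z => (τ z)⁻¹) h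
    simp only [map_mul, hτe, hτH a ha, hτH b hb, hτH c hc, mul_inv_rev, inv_inv, hei] at h1
    have h2 : b * e * c = c * e * b := by
      rw [← h, mul_assoc, h1, mul_assoc]
    exact (inj b hb c hc c hc b hb h2).1
  have F3 : ∀ a ∈ H, (∃ b ∈ H, ∃ c ∈ H, e * a * e = b * e * c) →
      e * a * e = a⁻¹ * e * a⁻¹ := by
    rintro a ha ⟨b, hb, c, hc, h⟩
    have hbc := F3a a ha b hb c hc h
    subst hbc
    have h1 : e * b * e = a * e * b⁻¹ := by
      have : a = e * (e * a * e) * e := by simp only [mul_assoc, hee, he, mul_one]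
      conv_rhs => rw [this, h]
      simp only [mul_assoc, hee, mul_inv_cancel, mul_one]
    have h2 := F3a b hb a ha b⁻¹ (inv_mem hb) h1
    subst h2
    simpa using h
  have conjN : ∀ (N : Subgroup G) (a : G), e * a * e ∈ N → ∀ k ∈ Subgroup.zpowers a,
      e * k * e ∈ N := by
    intro N a ha k hk
    have : Subgroup.zpowers a ≤ N.comap (MulAut.conj e).toMonoidHom := by
      rw [Subgroup.zpowers_le]
      simpa [hei] using ha
    simpa [hei] using this hk
  -- `1 ∈ A`
  have R1 : e * y * e = y⁻¹ * e * y⁻¹ := by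
    apply F3 y hyH
    by_contra hno
    obtain ⟨N, hy, hg, hne⟩ := F4 _ hno
    obtain ⟨a, ha, b, hb, c, hc, h⟩ := F1
    have hHN : H ≤ N := by rw [hH, Subgroup.zpowers_le]; exact hy
    have h1 := conjN N y hg a (by rw [← hH]; exact ha)
    rw [h] at h1
    apply hne
    rw [mul_mem_cancel_right (hHN hc), mul_mem_cancel_left (hHN hb)] at h1
    exact h1
  have noY : ∀ N : Subgroup G, y ∈ N → e ∉ N → e * y * e ∉ N := by
    intro N hy hne h
    rw [R1, mul_mem_cancel_right (inv_mem hy), mul_mem_cancel_left (inv_mem hy)] at h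
    exact hne h
  have dvdOf : ∀ (N : Subgroup G) (p : ℕ), p.Prime → y ∈ N → e ∉ N → e * y ^ p * e ∈ N →
      p ∣ orderOf y := by
    intro N p hp hy hne h
    by_contra hnd
    have hco : (orderOf y).Coprime p := ((Nat.Prime.coprime_iff_not_dvd hp).2 hnd).symm
    apply noY N hy hne
    apply conjN N _ h
    apply mem_zpowers_of_orderOf_eq (y := y)
    · exact pow_mem (Subgroup.mem_zpowers y) p
    · exact Subgroup.mem_zpowers y
    · exact Nat.Coprime.orderOf_pow hco
  refine ⟨R1, ?_⟩
  have R1' : e * y⁻¹ * e = y * e * y := by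
    have := congrArg (·⁻¹) R1
    simp only [mul_inv_rev, inv_inv, hei] at this
    simpa [mul_assoc] using this
  by_cases h2 : ∃ b ∈ H, ∃ c ∈ H, e * y ^ 2 * e = b * e * c
  · left
    have h2' := F3 (y ^ 2) (pow_mem hyH 2) h2
    have h2i : e * (y ^ 2)⁻¹ * e = y ^ 2 * e * y ^ 2 := by
      have := congrArg (·⁻¹) h2'
      simp only [mul_inv_rev, inv_inv, hei] at this
      simpa [mul_assoc] using this
    have h3 : e * y ^ 2 * e = y * e * y := by
      calc e * y ^ 2 * e = (e * y * e) * (e * y * e) := by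
            simp only [mul_assoc, hee, pow_two]
        _ = y⁻¹ * (e * (y ^ 2)⁻¹ * e) * y⁻¹ := by rw [R1]; group
        _ = y * e * y := by rw [h2i]; group
    rw [h2'] at h3
    have := (inj _ (inv_mem (pow_mem hyH 2)) _ (inv_mem (pow_mem hyH 2)) _ hyH _ hyH h3).1
    rw [inv_eq_iff_mul_eq_one, ← pow_succ] at this
    exact this
  · right
    obtain ⟨N, hy, hg, hne⟩ := F4 _ h2
    have hHN : H ≤ N := by rw [hH, Subgroup.zpowers_le]; exact hy
    have d2 := dvdOf N 2 Nat.prime_two hy hne hg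
    have c2 : Nat.card (Subgroup.zpowers (y ^ 2)) = orderOf y / 2 := by
      rw [Nat.card_zpowers, orderOf_pow_of_dvd (by norm_num) d2]
    have Z2H : Subgroup.zpowers (y ^ 2) ≤ H := by
      rw [Subgroup.zpowers_le]; exact pow_mem hyH 2
    have hZN := conjN N _ hg
    -- index at least 3
    have hidx : 3 * Nat.card N ≤ Nat.card G := by
      rw [← N.index_mul_card]
      apply Nat.mul_le_mul_right
      have i0 : N.index ≠ 0 := Subgroup.index_ne_zero_of_finite
      have i1 : N.index ≠ 1 := by
        intro h; rw [Subgroup.index_eq_one] at h; apply hne; rw [h]; trivial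
      have i2 : N.index ≠ 2 := by
        intro h
        have hn := Subgroup.normal_of_index_eq_two h
        have := hn.conj_mem y hy e
        rw [hei] at this
        exact noY N hy hne this
      omega
    have einj : ∀ a ∈ H, ∀ b ∈ H, ∀ a' ∈ H, ∀ b' ∈ H, e * a * e * b = e * a' * e * b' →
        a = a' ∧ b = b' := by
      intro a ha b hb a' ha' b' hb' h
      apply inj a ha b hb a' ha' b' hb'
      simpa [mul_assoc] using h
    have low : orderOf y / 2 * orderOf y ≤ Nat.card N := by
      let f : Subgroup.zpowers (y ^ 2) × H → N := fun p =>
        ⟨e * p.1 * e * p.2, mul_mem (hZN _ p.1.2) (hHN p.2.2)⟩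
      have hf : Function.Injective f := by
        rintro ⟨⟨a, ha⟩, b, hb⟩ ⟨⟨a', ha'⟩, b', hb'⟩ h
        have h := congrArg Subtype.val h
        obtain ⟨rfl, rfl⟩ := einj a (Z2H ha) b hb a' (Z2H ha') b' hb' h
        rfl
      have := Nat.card_le_card_of_injective f hf
      rwa [Nat.card_prod, hcH, c2] at this
    refine ⟨d2, le_trans (Nat.mul_le_mul_left 3 low) hidx, ?_⟩
    apply F3 (y ^ 3) (pow_mem hyH 3)
    by_contra h3
    obtain ⟨W, hyW, hgW, hneW⟩ := F4 _ h3
    have hHW : H ≤ W := by rw [hH, Subgroup.zpowers_le]; exact hyW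
    have d3 := dvdOf W 3 Nat.prime_three hyW hneW hgW
    have d6 : 6 ∣ orderOf y := by omega
    have c6 : Nat.card (Subgroup.zpowers (y ^ 6)) = orderOf y / 6 := by
      rw [Nat.card_zpowers, orderOf_pow_of_dvd (by norm_num) d6]
    have Z6H : Subgroup.zpowers (y ^ 6) ≤ H := by
      rw [Subgroup.zpowers_le]; exact pow_mem hyH 6
    have Z6Z2 : Subgroup.zpowers (y ^ 6) ≤ Subgroup.zpowers (y ^ 2) := by
      rw [Subgroup.zpowers_le, show 6 = 2 * 3 by norm_num, pow_mul]
      exact pow_mem (Subgroup.mem_zpowers _) 3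
    have Z6Z3 : Subgroup.zpowers (y ^ 6) ≤ Subgroup.zpowers (y ^ 3) := by
      rw [Subgroup.zpowers_le, show 6 = 3 * 2 by norm_num, pow_mul]
      exact pow_mem (Subgroup.mem_zpowers _) 2
    have y42 : y ^ 4 ∈ Subgroup.zpowers (y ^ 2) := by
      rw [show 4 = 2 * 2 by norm_num, pow_mul]
      exact pow_mem (Subgroup.mem_zpowers _) 2
    have hWc := conjN W _ hgW
    let f : (Subgroup.zpowers (y ^ 2) × H) ⊕ (Subgroup.zpowers (y ^ 6) × H) → N :=
      Sum.elim (fun p => ⟨e * p.1 * e * p.2, mul_mem (hZN _ p.1.2) (hHN p.2.2)⟩)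
        (fun p => ⟨y * (e * (y ^ 4 * p.1) * e * p.2),
          mul_mem hy (mul_mem (hZN _ (mul_mem y42 (Z6Z2 p.1.2))) (hHN p.2.2))⟩)
    have hf : Function.Injective f := by
      apply Function.Injective.sumElim
      · rintro ⟨⟨a, ha⟩, b, hb⟩ ⟨⟨a', ha'⟩, b', hb'⟩ h
        have h := congrArg Subtype.val h
        obtain ⟨rfl, rfl⟩ := einj a (Z2H ha) b hb a' (Z2H ha') b' hb' h
        rfl
      · rintro ⟨⟨a, ha⟩, b, hb⟩ ⟨⟨a', ha'⟩, b', hb'⟩ h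
        have h := mul_left_cancel (congrArg Subtype.val h)
        obtain ⟨h5, rfl⟩ := einj (y ^ 4 * a) (mul_mem (pow_mem hyH 4) (Z6H ha)) b hb
          (y ^ 4 * a') (mul_mem (pow_mem hyH 4) (Z6H ha')) b' hb' h
        obtain rfl := mul_left_cancel h5
        rfl
      · rintro ⟨⟨a, ha⟩, b, hb⟩ ⟨⟨a', ha'⟩, b', hb'⟩ h
        have h : e * a * e * b = y * (e * (y ^ 4 * a') * e * b') := congrArg Subtype.val h
        apply hneW
        have h6 : y * a * e * b = e * (y ^ 3 * a') * e * b' := by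
          calc y * a * e * b = y * e * (e * a * e * b) := by simp only [mul_assoc, hee]
            _ = y * (e * y * e) * (y ^ 4 * a') * e * b' := by rw [h]; simp only [mul_assoc]
            _ = _ := by rw [R1]; group
        have h7 : e * (y ^ 3 * a') * e * b' ∈ W :=
          mul_mem (hWc _ (mul_mem (Subgroup.mem_zpowers _) (Z6Z3 ha'))) (hHW hb')
        rw [← h6, mul_mem_cancel_right (hHW hb),
          mul_mem_cancel_left (mul_mem hyW (hHW (Z2H ha)))] at h7
        exact h7
    have := Nat.card_le_card_of_injective f hf
    rw [Nat.card_sum, Nat.card_prod, Nat.card_prod, hcH, c2, c6] at this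
    obtain ⟨t, ht⟩ := d6
    rw [ht, show 6 * t / 2 = 3 * t by omega, show 6 * t / 6 = t by omega] at this
    rw [ht] at hden
    nlinarith

end Main

/-- **Regular map density theorem.** A reflexive regular map that is simple and has
density exceeding 1/2 (i.e. 2q² > |G|) is the tetrahedral map or a Fermat map. -/
theorem regular_map_density_theorem
    (G : Type*) [Group G] [Finite G] (x y : G)
    (hgen : Subgroup.closure {x, y} = ⊤) (hxy : (x * y) ^ 2 = 1)
    (hrefl : IsReflexive x y) (hsimple : IsSimple x y)
    (hden : 2 * orderOf y ^ 2 > Nat.card G) :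
    IsTet G x y ∨ ∃ n : ℕ, 1 ≤ n ∧ IsFermat n G x y := by
  obtain ⟨σ, hσx, hσy⟩ := hrefl
  obtain ⟨hs1, hs2⟩ := hsimple
  have hE : (x * y) * (x * y) = 1 := by rw [← pow_two, hxy]
  have hei : (x * y)⁻¹ = x * y := inv_eq_of_mul_eq_one_left hE
  have heH : x * y ∉ Subgroup.zpowers y := by
    intro h
    apply hs1 1
    rw [QuotientGroup.eq]
    simpa using h
  have hF : ∀ a ∈ Subgroup.zpowers y, x * y * a * (x * y) ∈ Subgroup.zpowers y → a = 1 := by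
    intro a ha h
    have e1 : (QuotientGroup.mk 1 : Vertex y) = QuotientGroup.mk a := by
      rw [QuotientGroup.eq]; simpa using ha
    have e2 : (QuotientGroup.mk (1 * x * y) : Vertex y) = QuotientGroup.mk (a * x * y) := by
      rw [QuotientGroup.eq, one_mul, hei]; simpa [mul_assoc] using h
    have h3 := hs2 1 a (by rw [e1, e2])
    rw [QuotientGroup.eq, inv_one, one_mul] at h3
    obtain ⟨k, hk⟩ := h3
    simp only at hk
    rcases Int.even_or_odd' k with ⟨m, hm | hm⟩
    · rw [hm, zpow_mul, zpow_ofNat, hxy, one_zpow] at hk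
      exact hk.symm
    · rw [hm, zpow_add, zpow_mul, zpow_ofNat, hxy, one_zpow, one_mul, zpow_one] at hk
      exact absurd (hk ▸ ha) heH
  let τ : G →* G := (MulAut.conj y⁻¹).toMonoidHom.comp σ.toMonoidHom
  have hτe : τ (x * y) = x * y := by
    have : τ (x * y) = (x * y)⁻¹ := by
      simp [τ, hσx, hσy, mul_assoc]
    rw [this, hei]
  have hτy : τ y = y⁻¹ := by simp [τ, hσy]
  obtain ⟨R1, hor⟩ := core y (x * y) hE τ hτe hτy heH hF hden
  have hX : x = x * y * y⁻¹ := by group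
  have hx3 : x ^ 3 = 1 := by
    calc x ^ 3 = (x * y * y⁻¹) * (x * y * y⁻¹) * (x * y * y⁻¹) := by
          rw [← hX, pow_succ, pow_two]
      _ = x * y * (y⁻¹ * (x * y) * y⁻¹) * (x * y) * y⁻¹ := by simp only [mul_assoc]
      _ = (x * y) * (x * y) * y * ((x * y) * (x * y)) * y⁻¹ := by
          rw [← R1]; simp only [mul_assoc]
      _ = 1 := by rw [hE]; group
  rcases hor with hy3 | ⟨d2, hlow, R3⟩
  · left
    have hrel : ∀ r ∈ tetRels, FreeGroup.lift ![x, y] r = 1 := by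
      rintro r (rfl | rfl | rfl)
      · simpa using hx3
      · simpa using hy3
      · simpa using hxy
    obtain ⟨hfin, hcard⟩ := tet_card (PresentedGroup.of 0 : PresentedGroup tetRels)
      (PresentedGroup.of 1) (presented_gen _)
      (presented_rel tetRels (r := FreeGroup.of 0 ^ 3) (by simp [tetRels]))
      (presented_rel tetRels (r := FreeGroup.of 1 ^ 3) (by simp [tetRels]))
      (presented_rel tetRels (r := (FreeGroup.of 0 * FreeGroup.of 1) ^ 2) (by simp [tetRels]))
    apply isoOf x y hgen tetRels hrel hfin
    refine hcard.trans ?_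
    -- `|G| ≥ q + q²`
    let H := Subgroup.zpowers y
    let f : H ⊕ (H × H) → G := Sum.elim (fun a => a) (fun p => p.1 * (x * y) * p.2)
    have hf : Function.Injective f := by
      apply Function.Injective.sumElim
      · exact Subtype.val_injective
      · rintro ⟨⟨a, ha⟩, b, hb⟩ ⟨⟨a', ha'⟩, b', hb'⟩ h
        have h : a * (x * y) * b = a' * (x * y) * b' := h
        have h1 : x * y * (a'⁻¹ * a) * (x * y) = b' * b⁻¹ := by
          calc x * y * (a'⁻¹ * a) * (x * y) = x * y * a'⁻¹ * (a * (x * y) * b) * b⁻¹ := by group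
            _ = (x * y) * (x * y) * (b' * b⁻¹) := by rw [h]; group
            _ = _ := by rw [hE, one_mul]
        have h2 := hF _ (mul_mem (inv_mem ha') ha)
          (by rw [h1]; exact mul_mem hb' (inv_mem hb))
        have h3 : a = a' := by rw [inv_mul_eq_one] at h2; exact h2.symm
        subst h3
        have h4 : b = b' := mul_left_cancel h
        subst h4
        rfl
      · rintro ⟨a, ha⟩ ⟨⟨a', ha'⟩, b', hb'⟩ h
        have h : a = a' * (x * y) * b' := h
        rw [h] at ha
        rw [mul_mem_cancel_right hb', mul_mem_cancel_left ha'] at ha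
        exact heH ha
    have hc := Nat.card_le_card_of_injective f hf
    have hcH : Nat.card H = orderOf y := Nat.card_zpowers y
    rw [Nat.card_sum, Nat.card_prod, hcH] at hc
    have hq : orderOf y ∣ 3 := orderOf_dvd_of_pow_eq_one hy3
    rcases (Nat.dvd_prime Nat.prime_three).1 hq with hq | hq
    · rw [hq] at hc hden; omega
    · rw [hq] at hc; omega
  · right
    obtain ⟨n, hn⟩ := d2
    have hn1 : 1 ≤ n := by
      have := orderOf_pos y
      omega
    have hyn : y ^ (2 * n) = 1 := by rw [← hn, pow_orderOf_eq_one]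
    have hcm : (x * y * x⁻¹ * y⁻¹) ^ 3 = 1 := by
      have h1 : x * y * x⁻¹ * y⁻¹ = y⁻¹ * (x * y) * y⁻¹ * y⁻¹ := by
        rw [← R1]
        have : x⁻¹ = y * (x * y) := by rw [← hei]; group
        rw [this]; group
      rw [h1]
      generalize x * y = e at *
      calc (y⁻¹ * e * y⁻¹ * y⁻¹) ^ 3
          = y⁻¹ * e * ((y ^ 3)⁻¹ * e * (y ^ 3)⁻¹) * e * y⁻¹ * y⁻¹ := by
            simp [pow_succ, mul_assoc]
        _ = y⁻¹ * (e * e) * y ^ 3 * (e * e) * y⁻¹ * y⁻¹ := by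
            rw [← R3]; simp only [mul_assoc]
        _ = 1 := by rw [hE]; group
    refine ⟨n, hn1, ?_⟩
    have hrel : ∀ r ∈ fermatRels n, FreeGroup.lift ![x, y] r = 1 := by
      rintro r (rfl | rfl | rfl | rfl)
      · simpa using hx3
      · simpa using hyn
      · simpa using hxy
      · simpa using hcm
    obtain ⟨hfin, hcard⟩ := fermat_card (PresentedGroup.of 0 : PresentedGroup (fermatRels n))
      (PresentedGroup.of 1) (presented_gen _) n hn1
      (presented_rel (fermatRels n) (r := FreeGroup.of 0 ^ 3) (by simp [fermatRels]))
      (presented_rel (fermatRels n) (r := FreeGroup.of 1 ^ (2 * n)) (by simp [fermatRels]))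
      (presented_rel (fermatRels n) (r := (FreeGroup.of 0 * FreeGroup.of 1) ^ 2)
        (by simp [fermatRels]))
      (presented_rel (fermatRels n)
        (r := (FreeGroup.of 0 * FreeGroup.of 1 * (FreeGroup.of 0)⁻¹ * (FreeGroup.of 1)⁻¹) ^ 3)
        (by simp [fermatRels]))
    apply isoOf x y hgen (fermatRels n) hrel hfin
    refine hcard.trans (le_trans ?_ hlow)
    rw [hn, Nat.mul_div_cancel_left n (by norm_num)]
    nlinarith

end RegularMap
end

section
/- Let (G,x,y) encode a reflexive regular map that is simple and satisfies 2q² > |G| (density exceeding 1/2). Then p = 3, i.e. the order of x is 3. -/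
namespace RegularMap

variable {G : Type*} [Group G]

section helpers
variable {G : Type*} [Group G]

theorem aux_inj {R y : G} (hR : R * R = 1)
    (F2 : ∀ a ∈ Subgroup.zpowers y, R * a * R ∈ Subgroup.zpowers y → a = 1)
    {a b a' b' : G} (ha : a ∈ Subgroup.zpowers y) (hb : b ∈ Subgroup.zpowers y)
    (ha' : a' ∈ Subgroup.zpowers y) (hb' : b' ∈ Subgroup.zpowers y)
    (h : a * R * b = a' * R * b') : a = a' ∧ b = b' := by
  have hRi : R⁻¹ = R := inv_eq_of_mul_eq_one_left hR
  have h1 : R * (a'⁻¹ * a) * R = b' * b⁻¹ := by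
    have : a = a' * R * b' * b⁻¹ * R⁻¹ := by rw [← h]; group
    rw [this, hRi]
    calc R * (a'⁻¹ * (a' * R * b' * b⁻¹ * R)) * R
        = (R * R) * b' * b⁻¹ * (R * R) := by group
      _ = _ := by rw [hR]; group
  have h2 := F2 _ (mul_mem (inv_mem ha') ha) (by rw [h1]; exact mul_mem hb' (inv_mem hb))
  have h3 : a = a' := (inv_mul_eq_one.mp h2).symm
  subst h3
  exact ⟨rfl, mul_left_cancel h⟩

theorem aux_count [Finite G] {y : G} (hden : 2 * orderOf y ^ 2 > Nat.card G)
    (f g : Subgroup.zpowers y × Subgroup.zpowers y → G)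
    (hf : Function.Injective f) (hg : Function.Injective g) : ∃ s t, f s = g t := by
  by_contra hcon
  push Not at hcon
  have hi : Function.Injective (Sum.elim f g) := hf.sumElim hg hcon
  have := Nat.card_le_card_of_injective _ hi
  rw [Nat.card_sum, Nat.card_prod, Nat.card_zpowers] at this
  nlinarith

theorem aux_zp {y c d : G} [Finite G] (hc : c ∈ Subgroup.zpowers y) (hd : d ∈ Subgroup.zpowers y)
    (h : orderOf c = orderOf d) : Subgroup.zpowers c = Subgroup.zpowers d := by
  obtain ⟨m, rfl⟩ : ∃ m : ℕ, y ^ m = c := mem_powers_iff_mem_zpowers.mpr hc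
  obtain ⟨n, rfl⟩ : ∃ n : ℕ, y ^ n = d := mem_powers_iff_mem_zpowers.mpr hd
  have hq : 0 < orderOf y := orderOf_pos y
  have hg : (orderOf y).gcd m = (orderOf y).gcd n := by
    rw [orderOf_pow, orderOf_pow] at h
    have h1 := Nat.div_mul_cancel (Nat.gcd_dvd_left (orderOf y) m)
    have h2 := Nat.div_mul_cancel (Nat.gcd_dvd_left (orderOf y) n)
    rw [h] at h1
    have h3 : 0 < orderOf y / (orderOf y).gcd n := by
      rcases Nat.eq_zero_or_pos (orderOf y / (orderOf y).gcd n) with h0 | h0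
      · rw [h0] at h2; omega
      · exact h0
    exact Nat.eq_of_mul_eq_mul_left h3 (h1.trans h2.symm)
  have key : ∀ k : ℕ, Subgroup.zpowers (y ^ k) = Subgroup.zpowers (y ^ ((orderOf y).gcd k)) := by
    intro k
    apply le_antisymm
    · rw [Subgroup.zpowers_le]
      obtain ⟨l, hl⟩ := Nat.gcd_dvd_right (orderOf y) k
      refine ⟨l, ?_⟩
      change (y ^ ((orderOf y).gcd k)) ^ (l : ℤ) = y ^ k
      rw [zpow_natCast, ← pow_mul, ← hl]
    · rw [Subgroup.zpowers_le]
      refine ⟨(orderOf y).gcdB k, ?_⟩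
      change (y ^ k) ^ ((orderOf y).gcdB k) = y ^ ((orderOf y).gcd k)
      rw [← zpow_natCast y ((orderOf y).gcd k), Nat.gcd_eq_gcd_ab, zpow_add, zpow_mul, zpow_mul,
        zpow_natCast, zpow_natCast, pow_orderOf_eq_one, one_zpow, one_mul]
  rw [key m, key n, hg]

end helpers

/-- A reflexive regular map that is simple with density exceeding 1/2 has p = 3. -/
theorem face_size_eq_three
    (G : Type*) [Group G] [Finite G] (x y : G)
    (hgen : Subgroup.closure {x, y} = ⊤) (hxy : (x * y) ^ 2 = 1)
    (hrefl : IsReflexive x y) (hsimple : IsSimple x y)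
    (hden : 2 * orderOf y ^ 2 > Nat.card G) :
    orderOf x = 3 := by
  have hR : (x * y) * (x * y) = 1 := by rw [← pow_two]; exact hxy
  obtain ⟨σ, hσx, hσy⟩ := hrefl
  obtain ⟨hs1, hs2⟩ := hsimple
  obtain ⟨R, hRdef⟩ : ∃ R, R = x * y := ⟨_, rfl⟩
  have hx : x = R * y⁻¹ := by rw [hRdef]; group
  rw [← hRdef] at hR
  have hRi : R⁻¹ = R := inv_eq_of_mul_eq_one_left hR
  have hRR : ∀ z, R * (R * z) = z := fun z => by rw [← mul_assoc, hR, one_mul]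
  have hyY : y ∈ Subgroup.zpowers y := Subgroup.mem_zpowers y
  have F1 : R ∉ Subgroup.zpowers y := by
    intro h
    apply hs1 1
    rw [QuotientGroup.eq]
    simpa [← hRdef] using h
  have F2 : ∀ a ∈ Subgroup.zpowers y, R * a * R ∈ Subgroup.zpowers y → a = 1 := by
    intro a ha h
    have e1 : (QuotientGroup.mk 1 : Vertex y) = QuotientGroup.mk a := by
      rw [QuotientGroup.eq]; simpa using ha
    have e2 : (QuotientGroup.mk (1 * x * y) : Vertex y) = QuotientGroup.mk (a * x * y) := by
      rw [QuotientGroup.eq, mul_assoc a, ← hRdef, one_mul, ← hRdef, hRi, ← mul_assoc]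
      exact h
    have h3 := hs2 1 a (by rw [e1, e2])
    rw [QuotientGroup.eq, ← hRdef, inv_one, one_mul] at h3
    obtain ⟨n, hn⟩ := h3
    have hn' : R ^ n = a := hn
    rcases Int.even_or_odd' n with ⟨k, hk | hk⟩
    · rw [← hn', hk, zpow_mul, zpow_two, hR, one_zpow]
    · exfalso
      apply F1
      have : R ^ n = R := by
        rw [hk, zpow_add, zpow_mul, zpow_two, hR, one_zpow, one_mul, zpow_one]
      rw [← this, hn']; exact ha
  -- the reflection fixing the edge
  obtain ⟨τ, hτR, hτy⟩ : ∃ τ : G ≃* G, τ R = R ∧ τ y = y⁻¹ := by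
    refine ⟨σ.trans (MulAut.conj y⁻¹), ?_, ?_⟩
    · simp only [MulEquiv.trans_apply, MulAut.conj_apply, hRdef, map_mul, hσx, hσy]
      rw [hRdef] at hRi
      rw [mul_inv_rev] at hRi
      rw [← hRi]; group
    · simp only [MulEquiv.trans_apply, MulAut.conj_apply, hσy]; group
  have hτ : ∀ a ∈ Subgroup.zpowers y, τ a = a⁻¹ := by
    rintro a ⟨n, rfl⟩
    simp [hτy]
  have hinj : Function.Injective (fun s : Subgroup.zpowers y × Subgroup.zpowers y =>
      (s.1 : G) * R * s.2) := by
    rintro ⟨a, b⟩ ⟨a', b'⟩ h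
    have := aux_inj hR F2 a.2 b.2 a'.2 b'.2 h
    exact Prod.ext (Subtype.ext this.1) (Subtype.ext this.2)
  -- some triangle exists
  obtain ⟨a, ha, b, hb, b', hb', hab⟩ : ∃ a ∈ Subgroup.zpowers y, ∃ b ∈ Subgroup.zpowers y,
      ∃ b' ∈ Subgroup.zpowers y, R * a * R = b * R * b' := by
    obtain ⟨s, t, h⟩ := aux_count hden _
      (fun s => R * ((s.1 : G) * R * s.2)) hinj (fun s t h => hinj (mul_left_cancel h))
    refine ⟨t.1, t.1.2, s.1, s.1.2, s.2 * (t.2 : G)⁻¹, mul_mem s.2.2 (inv_mem t.2.2), ?_⟩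
    calc R * (t.1 : G) * R = R * ((t.1 : G) * R * t.2) * (t.2 : G)⁻¹ := by group
      _ = _ := by rw [← h]; group
  -- the face corner is a triangle
  have key : ∃ a ∈ Subgroup.zpowers y, ∃ b ∈ Subgroup.zpowers y, R * y * R = a * R * b := by
    by_contra hno
    have hni : ¬ Function.Injective (fun s : Subgroup.zpowers y × Subgroup.zpowers y =>
      (s.1 : G) * (R * y * R) * s.2) := by
      intro hi
      obtain ⟨s, t, h⟩ := aux_count hden _ _ hinj hi
      apply hno
      refine ⟨(t.1 : G)⁻¹ * s.1, mul_mem (inv_mem t.1.2) s.1.2, s.2 * (t.2 : G)⁻¹,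
        mul_mem s.2.2 (inv_mem t.2.2), ?_⟩
      calc R * y * R = (t.1 : G)⁻¹ * (t.1 * (R * y * R) * t.2) * (t.2 : G)⁻¹ := by group
        _ = _ := by rw [← h]; group
    have : ∃ c ∈ Subgroup.zpowers y, ∃ d ∈ Subgroup.zpowers y, c ≠ 1 ∧
        d = (R * y * R)⁻¹ * c * (R * y * R) := by
      simp only [Function.Injective, not_forall] at hni
      obtain ⟨s, t, h, hne⟩ := hni
      have hd : (s.2 : G) * (t.2 : G)⁻¹ = (R * y * R)⁻¹ * ((s.1 : G)⁻¹ * t.1) * (R * y * R) := by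
        have : (s.2 : G) = (R * y * R)⁻¹ * (s.1 : G)⁻¹ * (t.1 * (R * y * R) * t.2) := by
          rw [← h]; group
        rw [this]; group
      refine ⟨(s.1 : G)⁻¹ * t.1, mul_mem (inv_mem s.1.2) t.1.2, s.2 * (t.2 : G)⁻¹,
        mul_mem s.2.2 (inv_mem t.2.2), ?_, hd⟩
      intro h1
      apply hne
      rw [h1] at hd
      have h2 : (s.2 : G) * (t.2 : G)⁻¹ = 1 := by rw [hd]; group
      exact Prod.ext (Subtype.ext (inv_mul_eq_one.mp h1)) (Subtype.ext (mul_inv_eq_one.mp h2))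
    obtain ⟨c, hc, d, hd, hc1, hdc⟩ := this
    have hord : orderOf c = orderOf d := by
      rw [hdc]
      have := orderOf_injective (MulAut.conj (R * y * R)⁻¹).toMonoidHom
        (MulAut.conj (R * y * R)⁻¹).injective c
      simpa [MulAut.conj_apply, mul_assoc] using this.symm
    have hzp := aux_zp hc hd hord
    have hstep : ∀ z ∈ Subgroup.zpowers c, ∃ z' ∈ Subgroup.zpowers c,
        R * z * R * y = y * R * z' * R := by
      rintro z ⟨n, rfl⟩
      refine ⟨d ^ n, by rw [hzp]; exact Subgroup.zpow_mem_zpowers d n, ?_⟩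
      have : d ^ n = (R * y * R)⁻¹ * c ^ n * (R * y * R) := by
        rw [hdc]
        have := conj_zpow (i := n) (a := (R * y * R)⁻¹) (b := c)
        rwa [inv_inv] at this
      rw [this]
      simp only [mul_inv_rev, hRi, mul_assoc, hRR, hR, mul_one, mul_inv_cancel_left]
    have hstepn : ∀ n : ℕ, ∀ z ∈ Subgroup.zpowers c, ∃ z' ∈ Subgroup.zpowers c,
        R * z * R * y ^ n = y ^ n * R * z' * R := by
      intro n
      induction n with
      | zero => intro z hz; exact ⟨z, hz, by simp⟩
      | succ n ih =>
        intro z hz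
        obtain ⟨z', hz', h1⟩ := ih z hz
        obtain ⟨z'', hz'', h2⟩ := hstep z' hz'
        refine ⟨z'', hz'', ?_⟩
        calc R * z * R * y ^ (n + 1) = (R * z * R * y ^ n) * y := by rw [pow_succ]; group
          _ = y ^ n * (R * z' * R * y) := by rw [h1]; group
          _ = _ := by rw [h2, pow_succ]; simp only [mul_assoc]
    obtain ⟨n, hn⟩ : ∃ n : ℕ, y ^ n = a := by
      have := (mem_powers_iff_mem_zpowers).mpr ha
      exact this
    obtain ⟨c', hc', h1⟩ := hstepn n c (Subgroup.mem_zpowers c)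
    rw [hn] at h1
    have hc'Y : c' ∈ Subgroup.zpowers y :=
      (Subgroup.zpowers_le.mpr hc) hc'
    -- `a * R = R * b * R * b'`
    have h2 : a * R = R * b * R * b' := by
      calc a * R = R * (R * a * R) := by simp only [mul_assoc, hRR]
        _ = _ := by rw [hab]; simp only [mul_assoc]
    have h3 : (c * b) * R * b' = b * R * (b' * c') := by
      calc (c * b) * R * b' = R * (R * c * R * (R * b * R * b')) := by
            simp only [mul_assoc, hRR]
        _ = R * (R * c * R * a) * R := by rw [← h2]; simp only [mul_assoc]
        _ = R * (a * R) * c' := by rw [h1]; simp only [mul_assoc, hR, mul_one]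
        _ = _ := by rw [h2]; simp only [mul_assoc, hRR]
    have h4 := (aux_inj hR F2 (mul_mem hc hb) hb' hb (mul_mem hb' hc'Y) h3).1
    exact hc1 (by simpa using h4)
  obtain ⟨e, he, f, hf, h⟩ := key
  have hef : e = f := by
    have h1 := congrArg τ h
    simp only [map_mul, hτR, hτy, hτ e he, hτ f hf] at h1
    have h2 := congrArg (·⁻¹) h1
    simp only [mul_inv_rev, inv_inv, hRi, ← mul_assoc] at h2
    rw [h] at h2
    exact (aux_inj hR F2 he hf hf he h2).1
  subst hef
  have h5 : R * e * R = y * R * e⁻¹ := by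
    have : R * (R * y * R) * e⁻¹ = R * (e * R * e) * e⁻¹ := by rw [h]
    simp only [mul_assoc, hRR, mul_inv_cancel, mul_one] at this
    simp only [mul_assoc]; exact this.symm
  have hye : y = e⁻¹ := by
    have h1 := congrArg τ h5
    simp only [map_mul, hτR, hτy, hτ e he, map_inv, inv_inv] at h1
    have h2 := congrArg (·⁻¹) h1
    simp only [mul_inv_rev, inv_inv, hRi, ← mul_assoc] at h2
    rw [h5] at h2
    exact (aux_inj hR F2 hyY (inv_mem he) (inv_mem he) hyY h2).1
  have hey : e = y⁻¹ := by rw [hye, inv_inv]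
  rw [hey, inv_inv] at h5
  have hx3 : x ^ 3 = 1 := by
    rw [hx]
    calc (R * y⁻¹) ^ 3 = (R * y⁻¹ * R) * y⁻¹ * R * y⁻¹ := by
          simp only [pow_succ, pow_zero, one_mul, mul_assoc]
      _ = 1 := by rw [h5]; simp only [mul_assoc, mul_inv_cancel_left, hRR, mul_inv_cancel, one_mul]
  have hx1 : x ≠ 1 := by
    intro h1
    apply F1
    rw [hRdef, h1, one_mul]; exact hyY
  have : Fact (Nat.Prime 3) := ⟨Nat.prime_three⟩
  exact orderOf_eq_prime hx3 hx1

end RegularMap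
end

section
/- Let (G,x,y) encode a regular map, let v and v' be vertices, and let j be an integer such that S_v^j·v' = v'. Then there exists an integer k with S_v^j = S_{v'}^{k·j} in G; moreover k is uniquely determined modulo q/gcd(j,q) and is invertible modulo q/gcd(j,q). -/
namespace RegularMap

variable {G : Type*} [Group G]

theorem orderOf_zpow_aux {G : Type*} [Group G] [Finite G] (b : G) (j : ℤ) :
    orderOf (b ^ j) = orderOf b / Int.gcd j (orderOf b) := by
  have h : Int.gcd j (orderOf b) = Nat.gcd (orderOf b) j.natAbs := by
    rw [Int.gcd_comm]; simp [Int.gcd]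
  rw [h, ← orderOf_pow]
  rcases Int.natAbs_eq j with hj | hj
  · conv_lhs => rw [hj, zpow_natCast]
  · conv_lhs => rw [hj, zpow_neg, zpow_natCast, orderOf_inv]

theorem transfer_aux {G : Type*} [Group G] [Finite G] (a b : G) (q : ℕ) (j m : ℤ)
    (ha : orderOf a = q) (hb : orderOf b = q) (h : a ^ j = b ^ m) :
    ∃ k : ℤ, a ^ j = b ^ (k * j) ∧
      IsUnit (k : ZMod (q / Int.gcd j q)) ∧
      ∀ k' : ℤ, a ^ j = b ^ (k' * j) →
        (k' : ZMod (q / Int.gcd j q)) = (k : ZMod (q / Int.gcd j q)) := by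
  have hoa : orderOf (a ^ j) = q / Int.gcd j q := by rw [orderOf_zpow_aux, ha]
  have hob : orderOf (b ^ j) = q / Int.gcd j q := by rw [orderOf_zpow_aux, hb]
  have hq : 0 < q := hb ▸ orderOf_pos b
  have hdq : Int.gcd j q ∣ q := by
    have := Int.gcd_dvd_right j (q : ℤ)
    exact_mod_cast this
  obtain ⟨n, hn⟩ := hdq
  have hd0 : 0 < Int.gcd j q := Nat.pos_of_ne_zero (fun h0 => by rw [h0] at hn; omega)
  have hn0 : 0 < n := Nat.pos_of_ne_zero (fun h0 => by rw [h0] at hn; omega)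
  have hdiv : q / Int.gcd j q = n := Nat.div_eq_of_eq_mul_right hd0 hn
  have hkey : ∃ k : ℤ, b ^ m = b ^ (k * j) := by
    have h1 : b ^ (m * n) = 1 := by
      rw [zpow_mul, ← h, zpow_natCast, ← hdiv, ← hoa, pow_orderOf_eq_one]
    have h2 : (q : ℤ) ∣ m * n := by
      rw [← hb]; exact orderOf_dvd_iff_zpow_eq_one.mpr h1
    have h3 : ((Int.gcd j q : ℕ) : ℤ) ∣ m := by
      have h4 : ((Int.gcd j q : ℕ) : ℤ) * (n : ℤ) ∣ m * n := by
        have : (q : ℤ) = ((Int.gcd j q : ℕ) : ℤ) * (n : ℤ) := by exact_mod_cast hn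
        rwa [← this]
      exact Int.dvd_of_mul_dvd_mul_right (by exact_mod_cast hn0.ne') h4
    obtain ⟨t, ht⟩ := h3
    refine ⟨Int.gcdA j q * t, ?_⟩
    rw [zpow_eq_zpow_iff_modEq, hb]
    apply Int.ModEq.symm
    rw [Int.modEq_iff_dvd]
    refine ⟨Int.gcdB j q * t, ?_⟩
    rw [Int.gcd_eq_gcd_ab] at ht
    rw [ht]; ring
  obtain ⟨k, hk⟩ := hkey
  have hc : ∀ l : ℤ, b ^ (l * j) = (b ^ j) ^ l := fun l => by rw [mul_comm, zpow_mul]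
  refine ⟨k, h.trans hk, ?_, ?_⟩
  · have hab : a ^ j = (b ^ j) ^ k := by rw [h, hk, hc]
    have hle : Subgroup.zpowers (a ^ j) ≤ Subgroup.zpowers (b ^ j) := by
      rw [Subgroup.zpowers_le]; exact ⟨k, hab.symm⟩
    have heq : Subgroup.zpowers (a ^ j) = Subgroup.zpowers (b ^ j) := by
      apply Subgroup.eq_of_le_of_card_ge hle
      rw [Nat.card_zpowers, Nat.card_zpowers, hoa, hob]
    have hmem : b ^ j ∈ Subgroup.zpowers (a ^ j) := heq ▸ Subgroup.mem_zpowers _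
    obtain ⟨l, hl⟩ := Subgroup.mem_zpowers_iff.mp hmem
    rw [hab, ← zpow_mul] at hl
    have hl2 : (b ^ j) ^ (k * l) = (b ^ j) ^ (1 : ℤ) := by rw [hl, zpow_one]
    rw [zpow_eq_zpow_iff_modEq, hob, ← ZMod.intCast_eq_intCast_iff] at hl2
    push_cast at hl2
    exact IsUnit.of_mul_eq_one _ hl2
  · intro k' hk'
    have h5 : (b ^ j) ^ k' = (b ^ j) ^ k := by rw [← hc, ← hc, ← hk', h, hk]
    rwa [zpow_eq_zpow_iff_modEq, hob, ← ZMod.intCast_eq_intCast_iff] at h5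

/-- If `S_v^j` fixes `v'`, then `S_v^j = S_{v'}^(k·j)` for some `k` that is
well-defined and invertible modulo `q / gcd(j, q)`. -/
theorem rotation_transfer
    (G : Type*) [Group G] [Finite G] (x y : G)
    (hgen : Subgroup.closure {x, y} = ⊤) (hxy : (x * y) ^ 2 = 1)
    (v v' : Vertex y) (j : ℤ) (hfix : rot y v ^ j • v' = v') :
    ∃ k : ℤ, rot y v ^ j = rot y v' ^ (k * j) ∧
      IsUnit (k : ZMod (orderOf y / Int.gcd j (orderOf y))) ∧
      ∀ k' : ℤ, rot y v ^ j = rot y v' ^ (k' * j) →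
        (k' : ZMod (orderOf y / Int.gcd j (orderOf y))) = (k : ZMod (orderOf y / Int.gcd j (orderOf y))) := by
  induction v using QuotientGroup.induction_on with | _ g =>
  induction v' using QuotientGroup.induction_on with | _ h =>
  have hr : ∀ g : G, rot y (QuotientGroup.mk g) = g * y * g⁻¹ := fun _ => rfl
  have ho : ∀ g : G, orderOf (g * y * g⁻¹) = orderOf y := fun g =>
    orderOf_injective (MulAut.conj g).toMonoidHom (MulAut.conj g).injective y
  have h1 : (QuotientGroup.mk h : Vertex y) = QuotientGroup.mk (rot y (QuotientGroup.mk g) ^ j * h) :=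
    hfix.symm
  rw [QuotientGroup.eq] at h1
  obtain ⟨m, hm⟩ := Subgroup.mem_zpowers_iff.mp h1
  rw [hr] at hm
  simp only [hr]
  refine transfer_aux _ _ _ j m (ho g) (ho h) ?_
  rw [conj_zpow (a := h), hm]
  group

end RegularMap
end

section
/- Let (G,x,y) encode a reflexive regular map, let v and v' be vertices, and let j be an integer with S_v^j·v' = v'. Let φ_1,…,φ_n be automorphisms of the map and suppose that for each i there is a vertex v_i such that S_v^j fixes both v_i and φ_i(v_i). Then S_v^j fixes φ_n(φ_{n-1}(⋯φ_1(v')⋯)). -/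
namespace RegularMap

variable {G : Type*} [Group G]

theorem aux_cyc {C : Type*} [Group C] [Finite C] [IsCyclic C] (a b : C)
    (h : orderOf a = orderOf b) : Subgroup.zpowers a = Subgroup.zpowers b := by
  classical
  haveI := Fintype.ofFinite C
  have key : ∀ c : C, orderOf c = orderOf b → ((Subgroup.zpowers c : Set C)) =
      ((Finset.univ.filter fun g : C => g ^ orderOf b = 1 : Finset C) : Set C) := by
    intro c hc
    apply Set.eq_of_subset_of_ncard_le
    · rintro g ⟨k, rfl⟩
      simp only [Finset.coe_filter, Finset.mem_univ, true_and, Set.mem_setOf_eq]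
      rw [← hc, ← zpow_natCast, zpow_comm, zpow_natCast, pow_orderOf_eq_one, one_zpow]
    · rw [Set.ncard_coe_finset]
      refine (IsCyclic.card_pow_eq_one_le (orderOf_pos b)).trans ?_
      rw [← hc, ← Nat.card_zpowers]
      exact le_of_eq rfl
    · exact Set.toFinite _
  exact SetLike.coe_injective ((key a h).trans (key b rfl).symm)

theorem aux_cyc' {G : Type*} [Group G] [Finite G] (y a b : G)
    (ha : a ∈ Subgroup.zpowers y) (hb : b ∈ Subgroup.zpowers y)
    (h : orderOf a = orderOf b) : Subgroup.zpowers a = Subgroup.zpowers b := by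
  have := aux_cyc (⟨a, ha⟩ : Subgroup.zpowers y) ⟨b, hb⟩ (by simpa using h)
  have h2 := congrArg (Subgroup.map (Subgroup.zpowers y).subtype) this
  simpa [MonoidHom.map_zpowers] using h2

theorem aux_fix {G : Type*} [Group G] [Finite G] (y : G) (v : Vertex y) (j : ℤ) (g : G) :
    rot y v ^ j • (QuotientGroup.mk g : Vertex y) = QuotientGroup.mk g ↔
      (Subgroup.zpowers (y ^ j)).map (MulAut.conj g).toMonoidHom =
        Subgroup.zpowers (rot y v ^ j) := by
  induction v using QuotientGroup.induction_on with
  | H c =>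
  have hr : rot y (QuotientGroup.mk c : Vertex y) ^ j = c * y ^ j * c⁻¹ := by
    change (c * y * c⁻¹) ^ j = _
    rw [conj_zpow]
  rw [hr, MonoidHom.map_zpowers]
  change (QuotientGroup.mk ((c * y ^ j * c⁻¹) * g) : Vertex y) = _ ↔
    Subgroup.zpowers (g * y ^ j * g⁻¹) = _
  rw [eq_comm, QuotientGroup.eq]
  have hconj : ∀ a b : G, orderOf (a * b * a⁻¹) = orderOf b := fun a b =>
    (MulAut.conj a).orderOf_eq b
  constructor
  · intro hm
    have h1 := aux_cyc' y _ (y ^ j) hm ⟨j, rfl⟩ (by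
      have := hconj g⁻¹ (c * y ^ j * c⁻¹)
      rw [inv_inv, hconj] at this
      rw [← this]; simp only [mul_assoc])
    have h2 := congrArg (Subgroup.map (MulAut.conj g).toMonoidHom) h1
    rw [MonoidHom.map_zpowers, MonoidHom.map_zpowers] at h2
    have e1 : (MulAut.conj g).toMonoidHom (g⁻¹ * (c * y ^ j * c⁻¹ * g)) = c * y ^ j * c⁻¹ := by
      change g * _ * g⁻¹ = _
      group
    rw [e1] at h2
    exact h2.symm
  · intro h
    have hm : c * y ^ j * c⁻¹ ∈ Subgroup.zpowers (g * y ^ j * g⁻¹) := by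
      rw [h]; exact Subgroup.mem_zpowers _
    obtain ⟨k, hk⟩ := hm
    have hk' : (g * y ^ j * g⁻¹) ^ k = c * y ^ j * c⁻¹ := hk
    rw [← hk', conj_zpow]
    refine ⟨j * k, ?_⟩
    change y ^ (j * k) = _
    rw [zpow_mul]
    group

theorem aux_step {G : Type*} [Group G] [Finite G] (y : G) (v : Vertex y) (j : ℤ)
    (τ : G ≃* G) (hτ : (Subgroup.zpowers (y ^ j)).map τ.toMonoidHom = Subgroup.zpowers (y ^ j))
    (a : G) (φ : Vertex y → Vertex y)
    (hφ : ∀ g : G, φ (QuotientGroup.mk g) = QuotientGroup.mk (a * τ g))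
    (w u : Vertex y) (hw : rot y v ^ j • w = w) (hw' : rot y v ^ j • φ w = φ w)
    (hu : rot y v ^ j • u = u) : rot y v ^ j • φ u = φ u := by
  induction w using QuotientGroup.induction_on with
  | H g =>
  induction u using QuotientGroup.induction_on with
  | H h =>
  rw [hφ, aux_fix] at hw' ⊢
  rw [aux_fix] at hw hu
  have key : ∀ g : G, (Subgroup.zpowers (y ^ j)).map (MulAut.conj (a * τ g)).toMonoidHom =
      (((Subgroup.zpowers (y ^ j)).map (MulAut.conj g).toMonoidHom).map τ.toMonoidHom).map
        (MulAut.conj a).toMonoidHom := by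
    intro g
    conv_lhs => rw [← hτ]
    rw [Subgroup.map_map, Subgroup.map_map, Subgroup.map_map]
    congr 1
    ext z
    simp [mul_assoc]
  rw [key, hu, ← hw, ← key, hw']
  exact hw.symm

theorem aux_aut {G : Type*} [Group G] [Finite G] (y : G) (v : Vertex y) (j : ℤ)
    (σ : G ≃* G) (hσy : σ y = y⁻¹) (φ : Vertex y → Vertex y) (hφ : IsMapAut y σ φ)
    (w u : Vertex y) (hw : rot y v ^ j • w = w) (hw' : rot y v ^ j • φ w = φ w)
    (hu : rot y v ^ j • u = u) : rot y v ^ j • φ u = φ u := by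
  rcases hφ with ⟨a, ha⟩ | ⟨a, ha⟩
  · refine aux_step y v j (MulEquiv.refl G) ?_ a φ ha w u hw hw' hu
    exact Subgroup.map_id _
  · refine aux_step y v j σ ?_ a φ ha w u hw hw' hu
    rw [MonoidHom.map_zpowers]
    change Subgroup.zpowers (σ (y ^ j)) = _
    rw [map_zpow, hσy, inv_zpow, Subgroup.zpowers_inv]

/-- The set of fixed points of `S_v^j` is closed under automorphisms that map some
fixed point to a fixed point. -/
theorem fixed_points_closed_under_auts
    (G : Type*) [Group G] [Finite G] (x y : G)
    (hgen : Subgroup.closure {x, y} = ⊤) (hxy : (x * y) ^ 2 = 1)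
    (σ : G ≃* G) (hσx : σ x = x⁻¹) (hσy : σ y = y⁻¹)
    (v v' : Vertex y) (j : ℤ) (hfix : rot y v ^ j • v' = v')
    (n : ℕ) (φ : Fin n → Vertex y → Vertex y) (hφ : ∀ i, IsMapAut y σ (φ i))
    (vs : Fin n → Vertex y)
    (hvs : ∀ i, rot y v ^ j • vs i = vs i ∧ rot y v ^ j • (φ i (vs i)) = φ i (vs i)) :
    rot y v ^ j • ((List.ofFn φ).foldl (fun w f => f w) v') =
      (List.ofFn φ).foldl (fun w f => f w) v' := by
  have main : ∀ (l : List (Vertex y → Vertex y)) (u : Vertex y), (∀ f ∈ l, ∃ i, φ i = f) →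
      rot y v ^ j • u = u →
      rot y v ^ j • (l.foldl (fun w f => f w) u) = l.foldl (fun w f => f w) u := by
    intro l
    induction l with
    | nil => intro u _ hu; exact hu
    | cons f l ih =>
      intro u hl hu
      obtain ⟨i, rfl⟩ := hl f (by simp)
      exact ih _ (fun f hf => hl f (by simp [hf]))
        (aux_aut y v j σ hσy (φ i) (hφ i) (vs i) u (hvs i).1 (hvs i).2 hu)
  exact main _ v' (fun f hf => (List.mem_ofFn' φ f).mp hf) hfix

end RegularMap
end

section
/- Let (G,x,y) encode a reflexive regular map that is simple, satisfies 2q² > |G| (density exceeding 1/2), and has p = 3. Let v' be a diagonal neighbour of a vertex v. Then the primitive period J is the least element j of {1,…,q} such that S_v^j·v' = v'; moreover every vertex fixed by S_v^J belongs to V_v. -/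
namespace RegularMap

variable {G : Type*} [Group G]

lemma cyc_aux [Finite G] {y a b : G} (ha : a ∈ Subgroup.zpowers y) (hb : b ∈ Subgroup.zpowers y)
    (h : orderOf a = orderOf b) : a ∈ Subgroup.zpowers b := by
  have hy := isOfFinOrder_of_finite y
  obtain ⟨m, rfl⟩ := hy.mem_powers_iff_mem_zpowers.mpr ha
  obtain ⟨n, rfl⟩ := hy.mem_powers_iff_mem_zpowers.mpr hb
  simp only at *
  rw [orderOf_pow, orderOf_pow] at h
  have hq := orderOf_pos y
  have hg : (orderOf y).gcd m = (orderOf y).gcd n := by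
    have h1 := Nat.div_mul_cancel (Nat.gcd_dvd_left (orderOf y) m)
    have h2 := Nat.div_mul_cancel (Nat.gcd_dvd_left (orderOf y) n)
    rw [h] at h1
    have h3 : 0 < orderOf y / (orderOf y).gcd n := by
      rcases Nat.eq_zero_or_pos (orderOf y / (orderOf y).gcd n) with h0 | h0
      · rw [h0] at h2; omega
      · exact h0
    exact Nat.eq_of_mul_eq_mul_left h3 (h1.trans h2.symm)
  have key : y ^ ((orderOf y).gcd n) ∈ Subgroup.zpowers (y ^ n) := by
    refine ⟨Nat.gcdB (orderOf y) n, ?_⟩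
    have := Nat.gcd_eq_gcd_ab (orderOf y) n
    simp only
    rw [← zpow_natCast y (Nat.gcd _ _), this, zpow_add, zpow_mul, zpow_mul]
    simp
  obtain ⟨c, hc⟩ : (orderOf y).gcd n ∣ m := hg ▸ Nat.gcd_dvd_right _ _
  rw [hc, pow_mul]
  exact Subgroup.pow_mem _ key _

lemma norm_aux [Finite G] {y k : G} {j : ℕ} (h : k⁻¹ * y ^ j * k ∈ Subgroup.zpowers y) :
    k ∈ Subgroup.normalizer (Subgroup.zpowers (y ^ j) : Set G) := by
  have h1 : k⁻¹ * y ^ j * k ∈ Subgroup.zpowers (y ^ j) := by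
    apply cyc_aux h ⟨j, by simp⟩
    have := (MulAut.conj k⁻¹).toMonoidHom
    have h2 := orderOf_injective (MulAut.conj k⁻¹).toMonoidHom (MulAut.conj k⁻¹).injective (y ^ j)
    simpa using h2
  rw [← inv_inv k]
  apply Subgroup.inv_mem
  apply Subgroup.mem_normalizer_fintype
  rintro _ ⟨i, rfl⟩
  have : k⁻¹ * (y ^ j) ^ i * k⁻¹⁻¹ = (k⁻¹ * y ^ j * k) ^ i := by
    have := conj_zpow (i := i) (a := k⁻¹) (b := y ^ j)
    simpa using this.symm
  simp only [SetLike.mem_coe]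
  rw [this]
  exact Subgroup.zpow_mem _ h1 _

lemma norm_mem {y k : G} {j : ℕ}
    (h : k ∈ Subgroup.normalizer (Subgroup.zpowers (y ^ j) : Set G)) :
    k⁻¹ * y ^ j * k ∈ Subgroup.zpowers y := by
  have := (Subgroup.mem_normalizer_iff''.mp h (y ^ j)).mp (Subgroup.mem_zpowers _)
  exact (Subgroup.zpowers_le.mpr (Subgroup.pow_mem _ (Subgroup.mem_zpowers y) j) :
    Subgroup.zpowers (y ^ j) ≤ Subgroup.zpowers y) this

lemma rot_fix (y g h : G) (j : ℕ) :
    rot y (QuotientGroup.mk g) ^ j • (QuotientGroup.mk h : Vertex y) = QuotientGroup.mk h ↔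
      (g⁻¹ * h)⁻¹ * y ^ j * (g⁻¹ * h) ∈ Subgroup.zpowers y := by
  have e1 : rot y (QuotientGroup.mk g) = g * y * g⁻¹ := rfl
  rw [e1, conj_pow]
  change (QuotientGroup.mk (g * y ^ j * g⁻¹ * h) : Vertex y) = _ ↔ _
  rw [eq_comm, QuotientGroup.eq]
  have : h⁻¹ * (g * y ^ j * g⁻¹ * h) = (g⁻¹ * h)⁻¹ * y ^ j * (g⁻¹ * h) := by group
  rw [this]

/-- The involution swapping a vertex with a diagonal neighbour. -/
def tt (x y : G) : G := x⁻¹ * y * x⁻¹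

lemma tt_sq {x y : G} (hx : x ^ 3 = 1) (hxy : (x * y) ^ 2 = 1) : tt x y * tt x y = 1 := by
  have h1 : x⁻¹ * x⁻¹ = x := by
    calc x⁻¹ * x⁻¹ = x ^ 3 * x⁻¹ * x⁻¹ := by rw [hx, one_mul]
      _ = x := by group
  calc tt x y * tt x y = x⁻¹ * y * (x⁻¹ * x⁻¹) * y * x⁻¹ := by simp only [tt, mul_assoc]
    _ = x⁻¹ * x⁻¹ * (x * y) ^ 2 * x⁻¹ := by
        nth_rewrite 1 [h1]; simp only [pow_two]; group
    _ = 1 := by rw [hxy, mul_one, h1, mul_inv_cancel]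

lemma yxy {x y : G} (hxy : (x * y) ^ 2 = 1) : x * y = y⁻¹ * x⁻¹ := by
  rw [pow_two] at hxy
  rw [← mul_inv_rev]; exact eq_inv_of_mul_eq_one_left hxy

lemma mk_mul_zpow (y a : G) (i : ℤ) :
    (QuotientGroup.mk (a * y ^ i) : Vertex y) = QuotientGroup.mk a := by
  rw [eq_comm, QuotientGroup.eq]; exact ⟨i, by simp⟩

lemma rot_sq {x y : G} (hxy : (x * y) ^ 2 = 1) (a : G) :
    rot y (QuotientGroup.mk (a * x * y)) ^ 2 • (QuotientGroup.mk a : Vertex y)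
      = QuotientGroup.mk (a * y ^ (-1 : ℤ) * tt x y) := by
  have e1 : rot y (QuotientGroup.mk (a * x * y)) = (a * x * y) * y * (a * x * y)⁻¹ := rfl
  rw [e1, conj_pow]
  change (QuotientGroup.mk ((a * x * y) * y ^ 2 * (a * x * y)⁻¹ * a) : Vertex y) = _
  congr 1
  have := yxy hxy
  calc (a * x * y) * y ^ 2 * (a * x * y)⁻¹ * a = a * (x * y) * y * x⁻¹ := by
        simp only [pow_two]; group
    _ = _ := by rw [this]; simp only [tt]; group

lemma diag_imp {x y : G} (hxy : (x * y) ^ 2 = 1) {g : G} {v' : Vertex y}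
    (h : DiagNeighbor x y (QuotientGroup.mk g) v') :
    ∃ i : ℤ, v' = QuotientGroup.mk (g * y ^ i * tt x y) := by
  obtain ⟨w, ⟨hne, a, ha⟩, rfl⟩ := h
  rcases Set.pair_eq_pair_iff.mp ha with ⟨h1, h2⟩ | ⟨h1, h2⟩
  · obtain ⟨i, hi⟩ := QuotientGroup.eq.mp h1
    have hi : a = g * y ^ i := by simp only at hi; rw [hi]; group
    refine ⟨i + -1, ?_⟩
    have := rot_sq hxy a
    rw [h2, h1, this, hi, zpow_add]; simp only [mul_assoc]
  · obtain ⟨i, hi⟩ := QuotientGroup.eq.mp h1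
    have hi : a * x * y = g * y ^ i := by simp only at hi; rw [hi]; group
    refine ⟨i + -1, ?_⟩
    have := rot_sq hxy (a * x * y)
    have h3 : a * x * y * x * y = a := by
      calc a * x * y * x * y = a * (x * y) ^ 2 := by simp only [pow_two, mul_assoc]
        _ = a := by rw [hxy, mul_one]
    rw [h3] at this
    rw [h2, h1, this, hi, zpow_add]; simp only [mul_assoc]

lemma diag_of {x y : G} (hxy : (x * y) ^ 2 = 1) (hs : IsSimple x y) (g : G) (i : ℤ) :
    DiagNeighbor x y (QuotientGroup.mk g) (QuotientGroup.mk (g * y ^ i * tt x y)) := by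
  have hm := mk_mul_zpow y g (i + 1)
  refine ⟨QuotientGroup.mk (g * y ^ (i + 1) * x * y), ⟨?_, g * y ^ (i + 1), ?_⟩, ?_⟩
  · rw [← hm]; exact hs.1 _
  · rw [hm]
  · have := rot_sq hxy (g * y ^ (i + 1))
    rw [← hm, this]
    congr 1
    group

/-- The subgroup stabilizing the alignment class of the base vertex. -/
def KK (x y : G) : Subgroup G := Subgroup.closure {y, tt x y}

lemma y_mem (x y : G) : y ∈ KK x y := Subgroup.subset_closure (by simp)
lemma t_mem (x y : G) : tt x y ∈ KK x y := Subgroup.subset_closure (by simp)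

lemma aligned_imp {x y : G} (hxy : (x * y) ^ 2 = 1) {g : G} {w : Vertex y}
    (h : Aligned x y (QuotientGroup.mk g) w) :
    ∀ k : G, w = QuotientGroup.mk k → g⁻¹ * k ∈ KK x y := by
  have hz : ∀ z ∈ Subgroup.zpowers y, z ∈ KK x y :=
    fun z hz => (Subgroup.zpowers_le.mpr (y_mem x y)) hz
  induction h with
  | refl => exact fun k hk => hz _ (QuotientGroup.eq.mp hk)
  | @tail b c hb hc ih =>
    intro k hk
    obtain ⟨b', rfl⟩ := QuotientGroup.mk_surjective b
    have h1 := ih b' rfl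
    obtain ⟨i, hi⟩ := diag_imp hxy hc
    have h2 := hz _ (QuotientGroup.eq.mp (hi.symm.trans hk))
    have : g⁻¹ * k = (g⁻¹ * b') * y ^ i * tt x y * ((b' * y ^ i * tt x y)⁻¹ * k) := by group
    rw [this]
    exact mul_mem (mul_mem (mul_mem h1 (zpow_mem (y_mem x y) i)) (t_mem x y)) h2

lemma aligned_of {x y : G} (hx : x ^ 3 = 1) (hxy : (x * y) ^ 2 = 1) (hs : IsSimple x y) (g k : G)
    (hk : k ∈ KK x y) : Aligned x y (QuotientGroup.mk g) (QuotientGroup.mk (g * k)) := by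
  have ht : (tt x y)⁻¹ = tt x y := inv_eq_of_mul_eq_one_left (tt_sq hx hxy)
  have hstep : ∀ a, Aligned x y (QuotientGroup.mk a) (QuotientGroup.mk (a * tt x y)) := by
    intro a
    have := diag_of hxy hs a 0
    simp only [zpow_zero, mul_one] at this
    exact Relation.ReflTransGen.single this
  unfold KK at hk
  induction hk using Subgroup.closure_induction_right with
  | one => rw [mul_one]; exact Relation.ReflTransGen.refl
  | mul_right a _ b hb ih =>
    rcases hb with rfl | rfl
    · have := mk_mul_zpow b (g * a) 1
      rw [zpow_one] at this
      rw [← mul_assoc, this]; exact ih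
    · rw [← mul_assoc]; exact ih.trans (hstep _)
  | mul_inv_cancel a _ b hb ih =>
    rcases hb with rfl | rfl
    · have := mk_mul_zpow b (g * a) (-1)
      rw [zpow_neg_one] at this
      rw [← mul_assoc, this]; exact ih
    · rw [ht, ← mul_assoc]; exact ih.trans (hstep _)

lemma K_norm [Finite G] {x y : G} {j : ℕ} (h : (tt x y)⁻¹ * y ^ j * tt x y ∈ Subgroup.zpowers y) :
    KK x y ≤ Subgroup.normalizer (Subgroup.zpowers (y ^ j) : Set G) := by
  refine (Subgroup.closure_le _).mpr ?_
  rintro k (rfl | rfl)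
  · apply norm_aux
    refine ⟨j, ?_⟩
    simp only [zpow_natCast]
    group
  · exact norm_aux h

lemma cosets {x y : G} (hgen : Subgroup.closure {x, y} = ⊤) (hx : x ^ 3 = 1)
    (hxy : (x * y) ^ 2 = 1) (g : G) :
    g ∈ KK x y ∨ x⁻¹ * g ∈ KK x y ∨ x * g ∈ KK x y := by
  have h1 : x⁻¹ * x⁻¹ = x := by
    calc x⁻¹ * x⁻¹ = x ^ 3 * x⁻¹ * x⁻¹ := by rw [hx, one_mul]
      _ = x := by group
  have h1' : x * x = x⁻¹ := by
    calc x * x = x ^ 3 * x⁻¹ := by simp [pow_succ]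
      _ = x⁻¹ := by rw [hx, one_mul]
  have hY := y_mem x y
  have hT := t_mem x y
  have hxx : ∀ a : G, (a ∈ KK x y ∨ x⁻¹ * a ∈ KK x y ∨ x * a ∈ KK x y) →
      (x * a ∈ KK x y ∨ x⁻¹ * (x * a) ∈ KK x y ∨ x * (x * a) ∈ KK x y) := by
    intro a ha
    rw [← mul_assoc, ← mul_assoc, h1', inv_mul_cancel, one_mul]; tauto
  have hyy : ∀ a : G, (a ∈ KK x y ∨ x⁻¹ * a ∈ KK x y ∨ x * a ∈ KK x y) →
      (y * a ∈ KK x y ∨ x⁻¹ * (y * a) ∈ KK x y ∨ x * (y * a) ∈ KK x y) := by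
    rintro a (ha | ha | ha)
    · exact Or.inl (mul_mem hY ha)
    · right; right
      have : x * (y * a) = y⁻¹ * (x⁻¹ * a) := by
        rw [← mul_assoc, yxy hxy, mul_assoc]
      rw [this]; exact mul_mem (inv_mem hY) ha
    · right; left
      have : x⁻¹ * (y * a) = tt x y * (x * a) := by simp only [tt]; group
      rw [this]; exact mul_mem hT ha
  have hg : g ∈ Subgroup.closure {x, y} := hgen ▸ Subgroup.mem_top g
  induction hg using Subgroup.closure_induction_left with
  | one => exact Or.inl (one_mem _)
  | mul_left a ha b _ ih =>
    rcases ha with rfl | rfl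
    · exact hxx _ ih
    · exact hyy _ ih
  | inv_mul_cancel a ha b _ ih =>
    rcases ha with rfl | rfl
    · have h3 : a⁻¹ * b = a * (a * b) := by rw [← h1', mul_assoc]
      rw [h3]; exact hxx _ (hxx _ ih)
    · rcases ih with ha | ha | ha
      · exact Or.inl (mul_mem (inv_mem hY) ha)
      · right; right
        have : x * (a⁻¹ * b) = (tt x a)⁻¹ * (x⁻¹ * b) := by simp only [tt]; group
        rw [this]; exact mul_mem (inv_mem hT) ha
      · right; left
        have h2 : x⁻¹ * a⁻¹ = a * x := by
          rw [← mul_inv_rev, inv_eq_iff_mul_eq_one, ← mul_assoc]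
          have := congrArg (fun z => x⁻¹ * z * x) hxy
          simp only [pow_two] at this
          calc a * x * a * x = x⁻¹ * (x * a * (x * a)) * x := by group
            _ = 1 := by rw [this]; group
        rw [← mul_assoc, h2, mul_assoc]; exact mul_mem hY ha

lemma x_norm [Finite G] {x y : G} (hs : IsSimple x y) (hxy : (x * y) ^ 2 = 1) {j : ℕ}
    (h : x ∈ Subgroup.normalizer (Subgroup.zpowers (y ^ j) : Set G)) : y ^ j = 1 := by
  have h1 := norm_mem h
  have e1 : (QuotientGroup.mk (y ^ j) : Vertex y) = QuotientGroup.mk 1 := by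
    have := mk_mul_zpow y 1 j
    simpa using this
  have hr : ∀ a : G, (QuotientGroup.mk (a * y) : Vertex y) = QuotientGroup.mk a := by
    intro a
    have := mk_mul_zpow y a 1
    simpa using this
  have e2 : (QuotientGroup.mk (y ^ j * x * y) : Vertex y) = QuotientGroup.mk (1 * x * y) := by
    rw [hr, hr, eq_comm, QuotientGroup.eq]
    have : (1 * x)⁻¹ * (y ^ j * x) = x⁻¹ * y ^ j * x := by group
    rw [this]; exact h1
  have h2 := hs.2 (y ^ j) 1 (by rw [e1, e2])
  rw [eq_comm, QuotientGroup.eq, inv_one, one_mul] at h2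
  obtain ⟨i, hi⟩ := h2
  simp only at hi
  rcases Int.even_or_odd' i with ⟨c, rfl | rfl⟩
  · rw [← hi, zpow_mul]
    have : (x * y) ^ (2 : ℤ) = 1 := by exact_mod_cast hxy
    rw [this, one_zpow]
  · exfalso
    have h2 : (x * y) ^ (2 : ℤ) = 1 := by exact_mod_cast hxy
    rw [zpow_add, zpow_mul, h2, one_zpow, one_mul, zpow_one] at hi
    apply hs.1 1
    rw [one_mul, hi, e1]

lemma K_card [Finite G] {x y : G}
    (h : ∀ a ∈ Subgroup.zpowers y, (tt x y)⁻¹ * a * tt x y ∈ Subgroup.zpowers y → a = 1) :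
    orderOf y ^ 2 ≤ Nat.card (KK x y) := by
  have hz : Subgroup.zpowers y ≤ KK x y := Subgroup.zpowers_le.mpr (y_mem x y)
  let f : Subgroup.zpowers y × Subgroup.zpowers y → KK x y := fun p =>
    ⟨p.1 * tt x y * p.2, mul_mem (mul_mem (hz p.1.2) (t_mem x y)) (hz p.2.2)⟩
  have hf : Function.Injective f := by
    rintro ⟨⟨a, ha⟩, ⟨b, hb⟩⟩ ⟨⟨c, hc⟩, ⟨d, hd⟩⟩ hh
    have hh : a * tt x y * b = c * tt x y * d := congrArg Subtype.val hh
    have e1 : (tt x y)⁻¹ * (c⁻¹ * a) * tt x y = d * b⁻¹ := by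
      calc (tt x y)⁻¹ * (c⁻¹ * a) * tt x y = (tt x y)⁻¹ * c⁻¹ * (a * tt x y * b) * b⁻¹ := by group
        _ = d * b⁻¹ := by rw [hh]; group
    have e2 := h (c⁻¹ * a) (mul_mem (inv_mem hc) ha) (by rw [e1]; exact mul_mem hd (inv_mem hb))
    have e3 : c = a := inv_mul_eq_one.mp e2
    subst e3
    have e4 : b = d := mul_left_cancel hh
    subst e4
    rfl
  have := Nat.card_le_card_of_injective f hf
  rwa [Nat.card_prod, Nat.card_zpowers, ← pow_two] at this

/-- For a diagonal neighbour `v'` of `v`, the primitive period `J` is the least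
`j ∈ {1,…,q}` with `S_v^j • v' = v'`; and every vertex fixed by `S_v^J` lies in `V_v`. -/
theorem primPeriod_least_and_fixed_points
    (G : Type*) [Group G] [Finite G] (x y : G)
    (hgen : Subgroup.closure {x, y} = ⊤) (hxy : (x * y) ^ 2 = 1)
    (hrefl : IsReflexive x y) (hsimple : IsSimple x y)
    (hden : 2 * orderOf y ^ 2 > Nat.card G) (hp : orderOf x = 3)
    (v v' : Vertex y) (hdiag : DiagNeighbor x y v v') :
    IsLeast {j : ℕ | 1 ≤ j ∧ j ≤ orderOf y ∧ rot y v ^ j • v' = v'} (primPeriod x y) ∧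
    ∀ w : Vertex y, rot y v ^ primPeriod x y • w = w → Aligned x y v w := by
  have hx : x ^ 3 = 1 := hp ▸ pow_orderOf_eq_one x
  have hq := orderOf_pos y
  obtain ⟨g, rfl⟩ := QuotientGroup.mk_surjective v
  obtain ⟨i, rfl⟩ := diag_imp hxy hdiag
  set t := tt x y with ht
  have hS : ∀ j : ℕ, (∀ v v' : Vertex y, Aligned x y v v' → rot y v ^ j • v' = v') ↔
      t⁻¹ * y ^ j * t ∈ Subgroup.zpowers y := by
    intro j
    constructor
    · intro h
      have h1 := h (QuotientGroup.mk 1) (QuotientGroup.mk (1 * t))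
        (aligned_of hx hxy hsimple 1 t (t_mem x y))
      rw [rot_fix] at h1
      simpa using h1
    · intro h v v' hv
      obtain ⟨a, rfl⟩ := QuotientGroup.mk_surjective v
      obtain ⟨b, rfl⟩ := QuotientGroup.mk_surjective v'
      rw [rot_fix]
      exact norm_mem (K_norm h (aligned_imp hxy hv b rfl))
  have hfix : ∀ j : ℕ, rot y (QuotientGroup.mk g) ^ j •
      (QuotientGroup.mk (g * y ^ i * t) : Vertex y) = QuotientGroup.mk (g * y ^ i * t) ↔
      t⁻¹ * y ^ j * t ∈ Subgroup.zpowers y := by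
    intro j
    rw [rot_fix]
    have : (g⁻¹ * (g * y ^ i * t))⁻¹ * y ^ j * (g⁻¹ * (g * y ^ i * t)) = t⁻¹ * y ^ j * t := by
      group
    rw [this]
  have hJdef : primPeriod x y = sInf {j : ℕ | 1 ≤ j ∧ t⁻¹ * y ^ j * t ∈ Subgroup.zpowers y} := by
    unfold primPeriod
    simp only [hS]
  have hqm : orderOf y ∈ {j : ℕ | 1 ≤ j ∧ t⁻¹ * y ^ j * t ∈ Subgroup.zpowers y} := by
    refine ⟨hq, ?_⟩
    rw [pow_orderOf_eq_one]; simp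
  have hJm := Nat.sInf_mem ⟨_, hqm⟩
  have hJle : ∀ j : ℕ, 1 ≤ j → t⁻¹ * y ^ j * t ∈ Subgroup.zpowers y → primPeriod x y ≤ j := by
    intro j h1 h2
    rw [hJdef]; exact Nat.sInf_le ⟨h1, h2⟩
  rw [← hJdef] at hJm
  obtain ⟨hJ1, hJt⟩ := hJm
  refine ⟨⟨⟨hJ1, hJle _ hqm.1 hqm.2, (hfix _).mpr hJt⟩, ?_⟩, ?_⟩
  · rintro j ⟨h1, -, h3⟩
    exact hJle j h1 ((hfix j).mp h3)
  · intro w hw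
    obtain ⟨h, rfl⟩ := QuotientGroup.mk_surjective w
    rw [rot_fix] at hw
    by_cases hk : g⁻¹ * h ∈ KK x y
    · have := aligned_of hx hxy hsimple g _ hk
      rwa [mul_inv_cancel_left] at this
    exfalso
    have hN := norm_aux hw
    have hKN := K_norm hJt
    have hxN : x ∈ Subgroup.normalizer (Subgroup.zpowers (y ^ primPeriod x y) : Set G) := by
      rcases cosets hgen hx hxy (g⁻¹ * h) with h1 | h1 | h1
      · exact absurd h1 hk
      · have := mul_mem hN (inv_mem (hKN h1))
        have e : g⁻¹ * h * (x⁻¹ * (g⁻¹ * h))⁻¹ = x := by group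
        rwa [e] at this
      · have := mul_mem (hKN h1) (inv_mem hN)
        have e : x * (g⁻¹ * h) * (g⁻¹ * h)⁻¹ = x := by group
        rwa [e] at this
    have hy1 := x_norm hsimple hxy hxN
    have hqJ : orderOf y ≤ primPeriod x y := orderOf_le_of_pow_eq_one hJ1 hy1
    have hcard : orderOf y ^ 2 ≤ Nat.card (KK x y) := by
      apply K_card
      intro a ha hta
      classical
      have := (isOfFinOrder_of_finite y).mem_zpowers_iff_mem_range_orderOf.mp ha
      simp only [Finset.mem_image, Finset.mem_range] at this
      obtain ⟨n, hn, rfl⟩ := this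
      rcases Nat.eq_zero_or_pos n with rfl | hn0
      · simp
      · have := hJle n hn0 hta
        omega
    have hne : KK x y ≠ ⊤ := fun h0 => hk (h0 ▸ Subgroup.mem_top _)
    have hidx := Subgroup.one_lt_index_of_ne_top hne
    have hmul := (KK x y).card_mul_index
    have : Nat.card (KK x y) * 2 ≤ Nat.card (KK x y) * (KK x y).index :=
      Nat.mul_le_mul_left _ hidx
    omega
end RegularMap
end

section
/- Let (G,x,y) encode a reflexive regular map that is simple, satisfies 2q² > |G| (density exceeding 1/2), and has p = 3. Let v' be a diagonal neighbour of a vertex v. Then J = q if and only if v' is adjacent to v in Γ, and J = q if and only if V_v = V. -/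
namespace RegularMap

variable {G : Type*} [Group G]

theorem arc_of_adj {x y : G} (hxy : (x * y) ^ 2 = 1) {v w : Vertex y} (h : Adj x y v w) :
    ∃ g : G, v = QuotientGroup.mk g ∧ w = QuotientGroup.mk (g * (x * y)) := by
  obtain ⟨hne, g, hg⟩ := h
  have h2 : x * y * (x * y) = 1 := by rw [← pow_two]; exact hxy
  rcases Set.pair_eq_pair_iff.mp hg with ⟨h1, h3⟩ | ⟨h1, h3⟩
  · exact ⟨g, h1, by rw [h3, mul_assoc]⟩
  · refine ⟨g * x * y, h1, ?_⟩
    rw [h3, mul_assoc g x y, mul_assoc, h2, mul_one]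

theorem adj_of_arc {x y : G} (hs : IsSimple x y) (g : G) :
    Adj x y (QuotientGroup.mk g) (QuotientGroup.mk (g * (x * y))) := by
  rw [← mul_assoc]
  exact ⟨hs.1 g, g, rfl⟩

theorem rot_mk (y g : G) : rot y (QuotientGroup.mk g) = g * y * g⁻¹ := rfl

/-- The element carrying a vertex to its diagonal neighbour. -/
def dg (x y : G) : G := x * y * y ^ 2 * (x * y)⁻¹

theorem diag_iff {x y : G} (hxy : (x * y) ^ 2 = 1) (hs : IsSimple x y) {v v' : Vertex y} :
    DiagNeighbor x y v v' ↔
      ∃ g : G, v = QuotientGroup.mk g ∧ v' = QuotientGroup.mk (g * dg x y) := by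
  have key : ∀ g : G, rot y (QuotientGroup.mk (g * (x * y))) ^ 2 • (QuotientGroup.mk g : Vertex y)
      = QuotientGroup.mk (g * dg x y) := by
    intro g
    rw [rot_mk, MulAction.Quotient.smul_mk, smul_eq_mul]
    congr 1
    rw [conj_pow, dg]
    group
  constructor
  · rintro ⟨w, hw, rfl⟩
    obtain ⟨g, rfl, rfl⟩ := arc_of_adj hxy hw
    exact ⟨g, rfl, key g⟩
  · rintro ⟨g, rfl, rfl⟩
    exact ⟨_, adj_of_arc hs g, (key g).symm⟩

theorem adj_symm {x y : G} {v w : Vertex y} (h : Adj x y v w) : Adj x y w v := by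
  obtain ⟨hne, g, hg⟩ := h
  exact ⟨hne.symm, g, by rw [Set.pair_comm, hg]⟩

theorem free_of_simple {x y : G} (hxy : (x * y) ^ 2 = 1) (hs : IsSimple x y) (j : ℤ)
    (h : (QuotientGroup.mk (y ^ j * (x * y)) : Vertex y) = QuotientGroup.mk (x * y)) :
    y ^ j = 1 := by
  have hm : (QuotientGroup.mk (y ^ j) : Vertex y) = QuotientGroup.mk 1 := by
    rw [QuotientGroup.eq]
    exact ⟨-j, by simp⟩
  have := hs.2 (y ^ j) 1 (by rw [mul_assoc, h, hm]; simp)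
  rw [eq_comm, QuotientGroup.eq] at this
  obtain ⟨k, hk⟩ := this
  simp only [inv_one, one_mul] at hk
  rcases Int.even_or_odd' k with ⟨t, rfl | rfl⟩
  · rw [zpow_mul] at hk
    have : (x * y) ^ (2 : ℤ) = 1 := by exact_mod_cast hxy
    rw [this, one_zpow] at hk
    exact hk.symm
  · rw [zpow_add, zpow_mul] at hk
    have : (x * y) ^ (2 : ℤ) = 1 := by exact_mod_cast hxy
    rw [this, one_zpow, one_mul, zpow_one] at hk
    exfalso
    apply hs.1 1
    rw [one_mul, hk, hm]

theorem adj_period {x y : G} (hxy : (x * y) ^ 2 = 1) (hs : IsSimple x y) {v w : Vertex y}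
    (h : Adj x y v w) {j : ℕ} (hj : rot y v ^ j • w = w) : orderOf y ∣ j := by
  obtain ⟨g, rfl, rfl⟩ := arc_of_adj hxy h
  rw [rot_mk, MulAction.Quotient.smul_mk, smul_eq_mul, conj_pow] at hj
  rw [orderOf_dvd_iff_pow_eq_one]
  have := free_of_simple hxy hs (j : ℤ) (by
    rw [QuotientGroup.eq] at hj ⊢
    convert hj using 1
    rw [zpow_natCast]
    group)
  exact_mod_cast this

theorem q_mem [Finite G] (x y : G) : orderOf y ∈ {j : ℕ | 1 ≤ j ∧ ∀ v v' : Vertex y,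
    Aligned x y v v' → rot y v ^ j • v' = v'} := by
  refine ⟨orderOf_pos y, ?_⟩
  intro v v' _
  induction v using QuotientGroup.induction_on with
  | H g => rw [rot_mk, conj_pow, pow_orderOf_eq_one]; simp

theorem period_eq [Finite G] {x y : G} (hxy : (x * y) ^ 2 = 1) (hs : IsSimple x y)
    {v w : Vertex y} (h : Adj x y v w) (ha : Aligned x y v w) : primPeriod x y = orderOf y := by
  have hmem := Nat.sInf_mem ⟨_, q_mem x y⟩
  apply le_antisymm (Nat.sInf_le (q_mem x y))
  exact Nat.le_of_dvd hmem.1 (adj_period hxy hs h (hmem.2 _ _ ha))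

theorem conj_mem [Finite G] {y c : G} {j : ℕ}
    (h : c⁻¹ * y ^ j * c ∈ Subgroup.zpowers y) : c⁻¹ * y ^ j * c ∈ Subgroup.zpowers (y ^ j) := by
  obtain ⟨m, hm⟩ := h
  change y ^ m = _ at hm
  rw [← hm]
  have hpos := orderOf_pos y
  set q := orderOf y with hq
  have hr : orderOf (y ^ j) = q / q.gcd j := orderOf_pow _
  have h1 : (y ^ m) ^ (orderOf (y ^ j)) = 1 := by
    rw [hm]
    have := conj_pow (i := orderOf (y ^ j)) (a := c⁻¹) (b := y ^ j)
    rw [inv_inv] at this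
    rw [this, pow_orderOf_eq_one]; simp
  rw [hr, ← zpow_natCast, ← zpow_mul, ← orderOf_dvd_iff_zpow_eq_one, ← hq] at h1
  have hgpos : 0 < q.gcd j := Nat.gcd_pos_of_pos_left _ hpos
  obtain ⟨r, hrr⟩ := Nat.gcd_dvd_left q j
  have hqr : q / q.gcd j = r := 
    Nat.div_eq_of_eq_mul_right hgpos hrr
  rw [hqr] at h1
  have hrpos : 0 < r := by
    rcases Nat.eq_zero_or_pos r with h0 | h0
    · rw [h0] at hrr; omega
    · exact h0
  have h2 : ((q.gcd j : ℕ) : ℤ) ∣ m := by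
    have h3 : ((q.gcd j : ℕ) : ℤ) * r ∣ m * r := by
      have : (q : ℤ) = ((q.gcd j : ℕ) : ℤ) * r := by exact_mod_cast hrr
      rwa [← this]
    exact Int.dvd_of_mul_dvd_mul_right (by exact_mod_cast hrpos.ne') h3
  obtain ⟨t, rfl⟩ := h2
  refine ⟨Nat.gcdB q j * t, ?_⟩
  change (y ^ j) ^ _ = _
  rw [Nat.gcd_eq_gcd_ab, ← zpow_natCast, ← zpow_mul, add_mul, zpow_add, mul_assoc (q : ℤ), zpow_mul y q,
    zpow_natCast, hq, pow_orderOf_eq_one, one_zpow, one_mul, mul_assoc]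

theorem aligned_fix [Finite G] {x y : G} (hxy : (x * y) ^ 2 = 1) (hs : IsSimple x y) {j : ℕ}
    (hj : (QuotientGroup.mk (y ^ j * dg x y) : Vertex y) = QuotientGroup.mk (dg x y))
    {v v' : Vertex y} (h : Aligned x y v v') : rot y v ^ j • v' = v' := by
  induction v using QuotientGroup.induction_on with
  | H g =>
  have hc : (dg x y)⁻¹ * y ^ j * dg x y ∈ Subgroup.zpowers (y ^ j) := by
    apply conj_mem
    rw [eq_comm, QuotientGroup.eq] at hj
    rwa [mul_assoc]
  have hy : ∀ k n : ℤ, (y ^ k)⁻¹ * (y ^ j) ^ n * y ^ k = (y ^ j) ^ n := by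
    intro k n
    rw [← zpow_natCast, ← zpow_mul]
    group
  have key : ∀ a : G, v' = QuotientGroup.mk a →
      a⁻¹ * (g * y ^ j * g⁻¹) * a ∈ Subgroup.zpowers (y ^ j) := by
    have hchange : ∀ a b : G, (QuotientGroup.mk a : Vertex y) = QuotientGroup.mk b →
        a⁻¹ * (g * y ^ j * g⁻¹) * a ∈ Subgroup.zpowers (y ^ j) →
        b⁻¹ * (g * y ^ j * g⁻¹) * b ∈ Subgroup.zpowers (y ^ j) := by
      intro a b hab ha
      obtain ⟨k, hk⟩ := QuotientGroup.eq.mp hab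
      change y ^ k = _ at hk
      obtain ⟨n, hn⟩ := ha
      change (y ^ j) ^ n = _ at hn
      have hb : b = a * y ^ k := by rw [hk]; group
      refine ⟨n, ?_⟩
      change (y ^ j) ^ n = _
      rw [← hy k n, hn, hb]
      group
    induction h with
    | refl =>
      intro a ha
      apply hchange g a ha
      have : g⁻¹ * (g * y ^ j * g⁻¹) * g = y ^ j := by group
      rw [this]
      exact Subgroup.mem_zpowers _
    | tail _ hd ih =>
      intro a ha
      obtain ⟨b, hb, hb'⟩ := (diag_iff hxy hs).mp hd
      apply hchange _ _ (hb'.symm.trans ha)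
      obtain ⟨n, hn⟩ := ih b hb
      change (y ^ j) ^ n = _ at hn
      have e : (b * dg x y)⁻¹ * (g * y ^ j * g⁻¹) * (b * dg x y)
          = ((dg x y)⁻¹ * y ^ j * dg x y) ^ n := by
        have := conj_zpow (i := n) (a := (dg x y)⁻¹) (b := y ^ j)
        rw [inv_inv] at this
        rw [this, hn]
        group
      rw [e]
      exact Subgroup.zpow_mem _ hc n
  induction v' using QuotientGroup.induction_on with
  | H a =>
  rw [rot_mk, MulAction.Quotient.smul_mk, smul_eq_mul, conj_pow, eq_comm, QuotientGroup.eq]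
  have := key a rfl
  rw [← mul_assoc]
  exact (Subgroup.zpowers_le.mpr (Subgroup.pow_mem _ (Subgroup.mem_zpowers y) j)) this

theorem exists_fix [Finite G] {x y : G} (hxy : (x * y) ^ 2 = 1) (hs : IsSimple x y)
    (hden : 2 * orderOf y ^ 2 > Nat.card G)
    (hna : ¬ ∃ k : ℤ, (QuotientGroup.mk (y ^ k * (x * y)) : Vertex y)
      = QuotientGroup.mk (dg x y)) :
    ∃ j : ℕ, 1 ≤ j ∧ j < orderOf y ∧
      (QuotientGroup.mk (y ^ j * dg x y) : Vertex y) = QuotientGroup.mk (dg x y) := by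
  by_contra hcon
  push Not at hcon
  have hshift : ∀ (i j : ℕ) (a b : G), i ≤ j →
      (QuotientGroup.mk (y ^ i * a) : Vertex y) = QuotientGroup.mk (y ^ j * b) →
      (QuotientGroup.mk (y ^ (j - i) * b) : Vertex y) = QuotientGroup.mk a := by
    intro i j a b hij h
    rw [eq_comm, QuotientGroup.eq] at h ⊢
    convert inv_mem h using 1
    obtain ⟨k, rfl⟩ := Nat.exists_eq_add_of_le hij
    rw [Nat.add_sub_cancel_left, pow_add]
    group
  let f : Fin (orderOf y) ⊕ Fin (orderOf y) → Vertex y :=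
    Sum.elim (fun i => QuotientGroup.mk (y ^ (i : ℕ) * dg x y))
      (fun i => QuotientGroup.mk (y ^ (i : ℕ) * (x * y)))
  have w1 : ∀ i j : Fin (orderOf y), i ≤ j →
      (QuotientGroup.mk (y ^ (i : ℕ) * dg x y) : Vertex y)
        = QuotientGroup.mk (y ^ (j : ℕ) * dg x y) → i = j := by
    intro i j hij h
    by_contra hne
    have hlt : (i : ℕ) < j := lt_of_le_of_ne hij (fun h0 => hne (Fin.ext h0))
    exact hcon (j - i) (by omega) (by omega) (hshift _ _ _ _ hij h)
  have w2 : ∀ i j : Fin (orderOf y), i ≤ j →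
      (QuotientGroup.mk (y ^ (i : ℕ) * (x * y)) : Vertex y)
        = QuotientGroup.mk (y ^ (j : ℕ) * (x * y)) → i = j := by
    intro i j hij h
    by_contra hne
    have hlt : (i : ℕ) < j := lt_of_le_of_ne hij (fun h0 => hne (Fin.ext h0))
    have h1 := free_of_simple hxy hs ((j - i : ℕ) : ℤ) (by
      rw [zpow_natCast]; exact hshift _ _ _ _ hij h)
    rw [zpow_natCast] at h1
    have := Nat.le_of_dvd (by omega) (orderOf_dvd_of_pow_eq_one h1)
    omega
  have w3 : ∀ i j : Fin (orderOf y), (QuotientGroup.mk (y ^ (i : ℕ) * dg x y) : Vertex y)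
        ≠ QuotientGroup.mk (y ^ (j : ℕ) * (x * y)) := by
    intro i j h
    apply hna
    refine ⟨-(i : ℤ) + j, ?_⟩
    rw [eq_comm, QuotientGroup.eq] at h ⊢
    convert inv_mem h using 1
    rw [zpow_add, zpow_neg, zpow_natCast, zpow_natCast]
    group
  have hinj : Function.Injective f := by
    rintro (i | i) (j | j) h
    · rcases le_total i j with hij | hij
      · rw [w1 i j hij h]
      · rw [w1 j i hij h.symm]
    · exact absurd h (w3 i j)
    · exact absurd h.symm (w3 j i)
    · rcases le_total i j with hij | hij
      · rw [w2 i j hij h]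
      · rw [w2 j i hij h.symm]
  have hcard := Nat.card_le_card_of_injective f hinj
  rw [Nat.card_sum, Nat.card_fin] at hcard
  have hG := Subgroup.card_eq_card_quotient_mul_card_subgroup (Subgroup.zpowers y)
  rw [Nat.card_zpowers] at hG
  change Nat.card G = Nat.card (Vertex y) * _ at hG
  nlinarith

theorem all_aligned {x y : G} (hgen : Subgroup.closure {x, y} = ⊤)
    (hs : IsSimple x y) (had : ∀ v w, Adj x y v w → Aligned x y v w) (v w : Vertex y) :
    Aligned x y v w := by
  have hmain : ∀ a : G, ∀ g : G,
      Aligned x y (QuotientGroup.mk g) (QuotientGroup.mk (g * a)) ∧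
      Aligned x y (QuotientGroup.mk (g * a)) (QuotientGroup.mk g) := by
    intro a
    have ha : a ∈ Subgroup.closure {x, y} := by rw [hgen]; trivial
    induction ha using Subgroup.closure_induction with
    | mem b hb =>
      intro g
      have hy : ∀ g : G, (QuotientGroup.mk (g * y) : Vertex y) = QuotientGroup.mk g := by
        intro g
        rw [eq_comm, QuotientGroup.eq]
        exact ⟨1, by simp⟩
      rcases hb with rfl | rfl
      · have h := adj_of_arc hs g
        rw [← mul_assoc, hy] at h
        exact ⟨had _ _ h, had _ _ (adj_symm h)⟩
      · rw [hy]
        exact ⟨Relation.ReflTransGen.refl, Relation.ReflTransGen.refl⟩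
    | one => intro g; rw [mul_one]; exact ⟨Relation.ReflTransGen.refl, Relation.ReflTransGen.refl⟩
    | mul a b _ _ iha ihb =>
      intro g
      rw [← mul_assoc]
      exact ⟨(iha g).1.trans (ihb (g * a)).1, (ihb (g * a)).2.trans (iha g).2⟩
    | inv a _ iha =>
      intro g
      have := iha (g * a⁻¹)
      rw [inv_mul_cancel_right] at this
      exact ⟨this.2, this.1⟩
  induction v using QuotientGroup.induction_on with
  | H g =>
  induction w using QuotientGroup.induction_on with
  | H h =>
  have := (hmain (g⁻¹ * h) g).1
  rwa [mul_inv_cancel_left] at this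

/-- For a diagonal neighbour `v'` of `v`: `J = q` iff `v'` is adjacent to `v`, and
`J = q` iff `V_v = V`. -/
theorem primPeriod_eq_q_iff
    (G : Type*) [Group G] [Finite G] (x y : G)
    (hgen : Subgroup.closure {x, y} = ⊤) (hxy : (x * y) ^ 2 = 1)
    (hrefl : IsReflexive x y) (hsimple : IsSimple x y)
    (hden : 2 * orderOf y ^ 2 > Nat.card G) (hp : orderOf x = 3)
    (v v' : Vertex y) (hdiag : DiagNeighbor x y v v') :
    (primPeriod x y = orderOf y ↔ Adj x y v v') ∧
    (primPeriod x y = orderOf y ↔ ∀ w : Vertex y, Aligned x y v w) := by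
  have hdv : Aligned x y v v' := Relation.ReflTransGen.single hdiag
  have hJadj : primPeriod x y = orderOf y → Adj x y v v' := by
    intro hJ
    by_contra hna
    obtain ⟨g, rfl, rfl⟩ := (diag_iff hxy hsimple).mp hdiag
    obtain ⟨j, hj1, hjq, hj⟩ := exists_fix hxy hsimple hden (by
      rintro ⟨k, hk⟩
      apply hna
      have h := adj_of_arc hsimple (g * y ^ k)
      have e1 : (QuotientGroup.mk (g * y ^ k) : Vertex y) = QuotientGroup.mk g := by
        rw [eq_comm, QuotientGroup.eq]
        exact ⟨k, by simp⟩
      have e2 : (QuotientGroup.mk (g * y ^ k * (x * y)) : Vertex y)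
          = QuotientGroup.mk (g * dg x y) := by
        rw [QuotientGroup.eq] at hk ⊢
        convert hk using 1
        group
      rwa [e1, e2] at h)
    have : primPeriod x y ≤ j :=
      Nat.sInf_le ⟨hj1, fun v v' h => aligned_fix hxy hsimple hj h⟩
    omega
  have hadjall : Adj x y v v' → ∀ w : Vertex y, Aligned x y v w := by
    intro hadj
    apply all_aligned hgen hsimple
    intro a b hab
    apply Relation.ReflTransGen.single
    rw [diag_iff hxy hsimple] at hdiag ⊢
    obtain ⟨g, hg, hg'⟩ := hdiag
    obtain ⟨h, hh, hh'⟩ := arc_of_adj hxy hadj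
    obtain ⟨f, rfl, rfl⟩ := arc_of_adj hxy hab
    obtain ⟨k, hk⟩ := QuotientGroup.eq.mp (hg.symm.trans hh)
    change y ^ k = _ at hk
    have hE := QuotientGroup.eq.mp (hg'.symm.trans hh')
    refine ⟨f * (y ^ k)⁻¹, ?_, ?_⟩
    · rw [QuotientGroup.eq]
      exact ⟨-k, by simp⟩
    · rw [eq_comm, QuotientGroup.eq]
      convert hE using 1
      rw [hk]
      group
  have hallJ : (∀ w : Vertex y, Aligned x y v w) → primPeriod x y = orderOf y := by
    intro hall
    obtain ⟨w, hw, -⟩ := hdiag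
    exact period_eq hxy hsimple hw (hall w)
  exact ⟨⟨hJadj, fun h => hallJ (hadjall h)⟩, ⟨fun h => hadjall (hJadj h), hallJ⟩⟩


end RegularMap
end

section
/- Let (G,x,y) encode a reflexive regular map that is simple and satisfies 2q² > |G| (density exceeding 1/2), and suppose q is odd. Then (G,x,y) is the tetrahedral map tet; in particular q = 3, |G| = 12, and the density equals 3/4. -/
namespace RegularMap

variable {G : Type*} [Group G]

theorem aux_cyc_s9 {G : Type*} [Group G] [Finite G] (y z z' : G)
    (hz : z ∈ Subgroup.zpowers y) (hz' : z' ∈ Subgroup.zpowers y)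
    (h : z' ^ orderOf z = 1) : z' ∈ Subgroup.zpowers z := by
  classical
  have := Fintype.ofFinite G
  let Y := Subgroup.zpowers y
  have : Fintype Y := Fintype.ofFinite Y
  let Z : Y := ⟨z, hz⟩
  let Z' : Y := ⟨z', hz'⟩
  have hZ : orderOf Z = orderOf z := Subgroup.orderOf_mk z hz
  have hle := IsCyclic.card_pow_eq_one_le (α := Y) (orderOf_pos Z)
  have hsub : (Subgroup.zpowers Z : Set Y).toFinset ⊆
      Finset.univ.filter (fun a : Y => a ^ orderOf Z = 1) := by
    intro a ha
    simp only [Set.mem_toFinset, SetLike.mem_coe] at ha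
    obtain ⟨k, rfl⟩ := Subgroup.mem_zpowers_iff.mp ha
    simp only [Finset.mem_filter, Finset.mem_univ, true_and]
    rw [← zpow_natCast, ← zpow_mul, mul_comm, zpow_mul, zpow_natCast, pow_orderOf_eq_one, one_zpow]
  have hc : (Subgroup.zpowers Z : Set Y).toFinset.card = orderOf Z := by
    rw [Set.toFinset_card]
    exact Fintype.card_zpowers
  have heq := Finset.eq_of_subset_of_card_le hsub (by rw [hc]; exact hle)
  have hm : Z' ∈ Finset.univ.filter (fun a : Y => a ^ orderOf Z = 1) := by
    simp only [Finset.mem_filter, Finset.mem_univ, true_and]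
    apply Subtype.ext
    rw [hZ]
    simpa using h
  rw [← heq] at hm
  simp only [Set.mem_toFinset, SetLike.mem_coe] at hm
  obtain ⟨k, hk⟩ := Subgroup.mem_zpowers_iff.mp hm
  exact Subgroup.mem_zpowers_iff.mpr ⟨k, by simpa [Z, Z'] using congrArg Subtype.val hk⟩

theorem aux_norm {G : Type*} [Group G] [Finite G] (y z g : G)
    (hz : z ∈ Subgroup.zpowers y) (hz' : g⁻¹ * z * g ∈ Subgroup.zpowers y) :
    g⁻¹ ∈ Subgroup.normalizer (Subgroup.zpowers z : Set G) := by
  have hin : ∀ h, h ∈ Subgroup.zpowers z → g⁻¹ * h * g ∈ Subgroup.zpowers z := by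
    intro h hh
    obtain ⟨k, rfl⟩ := Subgroup.mem_zpowers_iff.mp hh
    have h1 : g⁻¹ * z * g ∈ Subgroup.zpowers z := by
      apply aux_cyc_s9 y z _ hz hz'
      have : (g⁻¹ * z * g) ^ orderOf z = g⁻¹ * z ^ orderOf z * g := by
        have := conj_pow (i := orderOf z) (a := g⁻¹) (b := z)
        simpa using this
      rw [this, pow_orderOf_eq_one]; simp
    have h2 : g⁻¹ * z ^ k * g = (g⁻¹ * z * g) ^ k := by
      have := conj_zpow (i := k) (a := g⁻¹) (b := z)
      simpa using this.symm
    rw [h2]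
    exact Subgroup.zpow_mem _ h1 k
  let f : Subgroup.zpowers z → Subgroup.zpowers z := fun h => ⟨g⁻¹ * h * g, hin h h.2⟩
  have hf : Function.Injective f := by
    intro a b hab
    have : g⁻¹ * a * g = g⁻¹ * (b : G) * g := congrArg Subtype.val hab
    exact Subtype.ext (by simpa using this)
  have hs := Finite.surjective_of_injective hf
  rw [Subgroup.mem_normalizer_iff]
  intro h
  rw [inv_inv]
  refine ⟨hin h, fun hh => ?_⟩
  obtain ⟨a, ha⟩ := hs ⟨_, hh⟩
  have : g⁻¹ * a * g = g⁻¹ * h * g := congrArg Subtype.val ha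
  have : (a : G) = h := by simpa using this
  rw [← this]; exact a.2

theorem aux_inj_s9 {G : Type*} [Group G] (y g : G)
    (h : ∀ z ∈ Subgroup.zpowers y, g⁻¹ * z * g ∈ Subgroup.zpowers y → z = 1) :
    Function.Injective
      (fun p : Subgroup.zpowers y × Subgroup.zpowers y => (p.1 : G) * g * p.2) := by
  rintro ⟨a, b⟩ ⟨c, d⟩ hab
  have hab : (a : G) * g * b = c * g * d := hab
  have h1 : (c : G)⁻¹ * a = 1 := by
    apply h _ (mul_mem (inv_mem c.2) a.2)
    have : g⁻¹ * ((c : G)⁻¹ * a) * g = d * (b : G)⁻¹ := by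
      calc _ = g⁻¹ * (c : G)⁻¹ * (a * g * b) * (b : G)⁻¹ := by group
        _ = _ := by rw [hab]; group
    rw [this]
    exact mul_mem d.2 (inv_mem b.2)
  have h2 : (a : G) = c := by
    calc (a : G) = c * ((c : G)⁻¹ * a) := by group
      _ = c := by rw [h1, mul_one]
  rw [h2] at hab
  have h3 : (b : G) = d := by simpa using hab
  rw [Subtype.ext h2, Subtype.ext h3]

theorem aux_dich {G : Type*} [Group G] [Finite G] (y s g : G)
    (hden : 2 * orderOf y ^ 2 > Nat.card G)
    (hs : ∀ z ∈ Subgroup.zpowers y, s⁻¹ * z * s ∈ Subgroup.zpowers y → z = 1)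
    (hg : ∀ z ∈ Subgroup.zpowers y, g⁻¹ * z * g ∈ Subgroup.zpowers y → z = 1) :
    ∃ a ∈ Subgroup.zpowers y, ∃ b ∈ Subgroup.zpowers y, g = a * s * b := by
  by_contra hcon
  push Not at hcon
  have hi := Function.Injective.sumElim (aux_inj_s9 y s hs) (aux_inj_s9 y g hg) (by
    rintro ⟨a, b⟩ ⟨c, d⟩ hab
    have hab : (a : G) * s * b = c * g * d := hab
    apply hcon _ (mul_mem (inv_mem c.2) a.2) _ (mul_mem b.2 (inv_mem d.2))
    calc g = (c : G)⁻¹ * (c * g * d) * (d : G)⁻¹ := by group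
      _ = _ := by rw [← hab]; group)
  have hc := Nat.card_le_card_of_injective _ hi
  rw [Nat.card_sum, Nat.card_prod, Nat.card_zpowers] at hc
  nlinarith

theorem aux_P (H : Type*) [Group H] (y t : H) (ht : t * t = 1) (hy : y ^ 3 = 1)
    (h3 : t * y * t = y⁻¹ * t * y⁻¹) (hgen : Subgroup.closure {y, t} = ⊤) :
    Finite H ∧ Nat.card H ≤ 12 := by
  let F : Fin 3 ⊕ Fin 3 × Fin 3 → H :=
    Sum.elim (fun i => y ^ (i : ℕ)) (fun p => y ^ (p.1 : ℕ) * t * y ^ (p.2 : ℕ))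
  have hn : ∀ n : ℕ, y ^ n = y ^ ((n % 3 : ℕ)) := fun n => pow_eq_pow_mod n hy
  have hy1 : ∀ n : ℕ, y ^ n ∈ Set.range F := fun n =>
    ⟨Sum.inl ⟨n % 3, Nat.mod_lt _ (by norm_num)⟩, (hn n).symm⟩
  have hy2 : ∀ n m : ℕ, y ^ n * t * y ^ m ∈ Set.range F := fun n m =>
    ⟨Sum.inr (⟨n % 3, Nat.mod_lt _ (by norm_num)⟩, ⟨m % 3, Nat.mod_lt _ (by norm_num)⟩), by
      rw [hn n, hn m]; rfl⟩
  have hinv : y⁻¹ = y ^ 2 := by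
    rw [inv_eq_iff_mul_eq_one, ← pow_succ', hy]
  have htinv : t⁻¹ = t := by rw [inv_eq_iff_mul_eq_one, ht]
  have hmy : ∀ h ∈ Set.range F, y * h ∈ Set.range F := by
    rintro _ ⟨(i | ⟨i, j⟩), rfl⟩
    · have : y * F (Sum.inl i) = y ^ (i + 1 : ℕ) := by simp [F, pow_succ']
      rw [this]; exact hy1 _
    · have : y * F (Sum.inr (i, j)) = y ^ (i + 1 : ℕ) * t * y ^ (j : ℕ) := by
        simp [F, pow_succ', mul_assoc]
      rw [this]; exact hy2 _ _
  have h3' : t * y ^ 2 * t = y * t * y := by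
    rw [← hinv]
    have := congrArg (·⁻¹) h3
    simpa [mul_assoc, htinv] using this
  have hmt : ∀ h ∈ Set.range F, t * h ∈ Set.range F := by
    rintro _ ⟨(i | ⟨i, j⟩), rfl⟩
    · simpa [F] using hy2 0 i
    · have e : t * F (Sum.inr (i, j)) = t * y ^ (i : ℕ) * t * y ^ (j : ℕ) := by
        simp [F, mul_assoc]
      rw [e]
      fin_cases i
      · simpa [ht] using hy1 j
      · have := hy2 2 (2 + j)
        simpa [h3, hinv, pow_add, mul_assoc] using this
      · have := hy2 1 (1 + j)
        simpa [h3', pow_add, mul_assoc] using this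
  have hall : ∀ h : H, h ∈ Set.range F := by
    intro h
    have hh : h ∈ Subgroup.closure {y, t} := by rw [hgen]; trivial
    induction hh using Subgroup.closure_induction_left with
    | one => simpa using hy1 0
    | mul_left a ha b hb ih =>
      rcases ha with rfl | rfl
      · exact hmy _ ih
      · exact hmt _ ih
    | inv_mul_cancel a ha b hb ih =>
      rcases ha with rfl | rfl
      · rw [hinv, pow_two, mul_assoc]; exact hmy _ (hmy _ ih)
      · rw [htinv]; exact hmt _ ih
  have hsurj : Function.Surjective F := hall
  refine ⟨Finite.of_surjective F hsurj, ?_⟩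
  have := Nat.card_le_card_of_surjective F hsurj
  simpa using this

theorem aux_core {G : Type*} [Group G] [Finite G] (y t : G) (ht : t * t = 1)
    (hI : ∀ z ∈ Subgroup.zpowers y, t⁻¹ * z * t ∈ Subgroup.zpowers y → z = 1)
    (τ : G ≃* G) (hτy : τ y = y⁻¹) (hτt : τ t = t)
    (hden : 2 * orderOf y ^ 2 > Nat.card G) (hodd : Odd (orderOf y)) :
    y ^ 3 = 1 ∧ t * y * t = y⁻¹ * t * y⁻¹ := by
  have hti : t⁻¹ = t := by rw [inv_eq_iff_mul_eq_one, ht]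
  -- swap lemma
  have hswap : ∀ a ∈ Subgroup.zpowers y, ∀ b ∈ Subgroup.zpowers y,
      ∀ c ∈ Subgroup.zpowers y, ∀ d ∈ Subgroup.zpowers y,
      a * t * b = c * t * d → a = c := by
    intro a ha b hb c hc d hd h
    have := aux_inj_s9 y t hI (a₁ := (⟨a, ha⟩, ⟨b, hb⟩)) (a₂ := (⟨c, hc⟩, ⟨d, hd⟩)) h
    simpa using congrArg (fun p => (p.1 : G)) this
  have hτz : ∀ z ∈ Subgroup.zpowers y, τ z = z⁻¹ := by
    intro z hz
    obtain ⟨k, rfl⟩ := Subgroup.mem_zpowers_iff.mp hz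
    simp [hτy]
  have hrel0 : ∀ z ∈ Subgroup.zpowers y, ∀ a ∈ Subgroup.zpowers y, ∀ b ∈ Subgroup.zpowers y,
      t * z * t = a * t * b → a = b := by
    intro z hz a ha b hb h
    have e1 : t * z⁻¹ * t = b⁻¹ * t * a⁻¹ := by
      have := congrArg (·⁻¹) h
      simpa [mul_assoc, hti] using this
    have e2 : t * z⁻¹ * t = a⁻¹ * t * b⁻¹ := by
      have := congrArg τ h
      simpa [hτz z hz, hτz a ha, hτz b hb, hτt] using this
    have := hswap _ (inv_mem hb) _ (inv_mem ha) _ (inv_mem ha) _ (inv_mem hb) (e1.symm.trans e2)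
    simpa using this.symm
  have hrel : ∀ z ∈ Subgroup.zpowers y, ∀ a ∈ Subgroup.zpowers y, ∀ b ∈ Subgroup.zpowers y,
      t * z * t = a * t * b → t * z * t = z⁻¹ * t * z⁻¹ := by
    intro z hz a ha b hb h
    have hab := hrel0 z hz a ha b hb h
    subst hab
    have e : t * a * t = z * t * a⁻¹ := by
      have : t * (t * z * t) * a⁻¹ = t * (a * t * a) * a⁻¹ := by rw [h]
      calc t * a * t = t * (a * t * a) * a⁻¹ := by group
        _ = t * (t * z * t) * a⁻¹ := by rw [h]
        _ = (t * t) * z * t * a⁻¹ := by group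
        _ = _ := by rw [ht]; group
    have := hrel0 a ha z hz _ (inv_mem ha) e
    rw [h, this]; simp
  -- a nonempty
  obtain ⟨z₀, hz₀, a₀, ha₀, b₀, hb₀, h₀⟩ : ∃ z ∈ Subgroup.zpowers y,
      ∃ a ∈ Subgroup.zpowers y, ∃ b ∈ Subgroup.zpowers y, t * z * t = a * t * b := by
    by_contra hcon
    push Not at hcon
    have h1 := aux_inj_s9 y t hI
    have hi := Function.Injective.sumElim h1 ((mul_right_injective t).comp h1) (by
      rintro ⟨a, b⟩ ⟨c, d⟩ hab
      have hab : (a : G) * t * b = t * (c * t * d) := hab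
      apply hcon c c.2 a a.2 _ (mul_mem b.2 (inv_mem d.2))
      calc t * (c : G) * t = t * (c * t * d) * (d : G)⁻¹ := by group
        _ = _ := by rw [← hab]; group)
    have hc := Nat.card_le_card_of_injective _ hi
    rw [Nat.card_sum, Nat.card_prod, Nat.card_zpowers] at hc
    nlinarith
  have key : ∀ z ∈ Subgroup.zpowers y, y ∈ Subgroup.zpowers z →
      t * z * t = z⁻¹ * t * z⁻¹ := by
    intro z hz hyz
    have : ∃ a ∈ Subgroup.zpowers y, ∃ b ∈ Subgroup.zpowers y, t * z * t = a * t * b := by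
      apply aux_dich y t _ hden hI
      intro u hu hu'
      have hN := aux_norm y u (t * z * t) hu hu'
      have hN' : t * z * t⁻¹ ∈ Subgroup.normalizer (Subgroup.zpowers u : Set G) := by
        have := inv_mem hN
        rw [inv_inv] at this
        rwa [hti]
      have hz₀z : z₀ ∈ Subgroup.zpowers z := by
        have : Subgroup.zpowers y ≤ Subgroup.zpowers z := by simpa using hyz
        exact this hz₀
      obtain ⟨k, hk⟩ := Subgroup.mem_zpowers_iff.mp hz₀z
      have hN2 : a₀ * t * b₀ ∈ Subgroup.normalizer (Subgroup.zpowers u : Set G) := by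
        have := Subgroup.zpow_mem _ hN' k
        rw [conj_zpow, hk, hti, h₀] at this
        exact this
      have hu2 := (Subgroup.mem_normalizer_iff''.mp hN2 u).mp (Subgroup.mem_zpowers u)
      have hle : Subgroup.zpowers u ≤ Subgroup.zpowers y := by simpa using hu
      have hu3 := hle hu2
      apply hI u hu
      have comm : a₀⁻¹ * u * a₀ = u := by
        obtain ⟨i, rfl⟩ := Subgroup.mem_zpowers_iff.mp hu
        obtain ⟨j, rfl⟩ := Subgroup.mem_zpowers_iff.mp ha₀
        group
      have e : t⁻¹ * u * t = b₀ * ((a₀ * t * b₀)⁻¹ * u * (a₀ * t * b₀)) * b₀⁻¹ := by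
        calc t⁻¹ * u * t = t⁻¹ * (a₀⁻¹ * u * a₀) * t := by rw [comm]
          _ = _ := by group
      rw [e]
      exact mul_mem (mul_mem hb₀ hu3) (inv_mem hb₀)
    obtain ⟨a, ha, b, hb, h⟩ := this
    exact hrel z hz a ha b hb h
  have k1 := key y (Subgroup.mem_zpowers y) (Subgroup.mem_zpowers y)
  have k2 := key (y ^ 2) (Subgroup.pow_mem _ (Subgroup.mem_zpowers y) 2) (by
    obtain ⟨m, hm⟩ := hodd
    refine Subgroup.mem_zpowers_iff.mpr ⟨m + 1, ?_⟩
    have : (y ^ 2) ^ (m + 1 : ℕ) = y := by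
      rw [← pow_mul, show 2 * (m + 1) = (2 * m + 1) + 1 by ring, ← hm, pow_succ,
        pow_orderOf_eq_one, one_mul]
    exact_mod_cast this)
  refine ⟨?_, k1⟩
  -- t y^2 t = (t y t)(t y t)
  have e1 : t * y ^ 2 * t = (t * y * t) * (t * y * t) := by
    calc t * y ^ 2 * t = t * y * 1 * y * t := by simp only [pow_two, mul_one, mul_assoc]
      _ = t * y * (t * t) * y * t := by rw [ht]
      _ = _ := by group
  rw [k2, k1] at e1
  have e2 : t * (y ^ 2)⁻¹ * t = t * y * t := by
    calc t * (y ^ 2)⁻¹ * t = y * ((y⁻¹ * t * y⁻¹) * (y⁻¹ * t * y⁻¹)) * y := by group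
      _ = y * ((y ^ 2)⁻¹ * t * (y ^ 2)⁻¹) * y := by rw [← e1]
      _ = y⁻¹ * t * y⁻¹ := by group
      _ = _ := k1.symm
  have e3 : (y ^ 2)⁻¹ = y := by simpa using e2
  calc y ^ 3 = y ^ 2 * y := pow_succ _ _
    _ = y ^ 2 * (y ^ 2)⁻¹ := by rw [e3]
    _ = 1 := by group

theorem odd_q_implies_tet
    (G : Type*) [Group G] [Finite G] (x y : G)
    (hgen : Subgroup.closure {x, y} = ⊤) (hxy : (x * y) ^ 2 = 1)
    (hrefl : IsReflexive x y) (hsimple : IsSimple x y)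
    (hden : 2 * orderOf y ^ 2 > Nat.card G) (hodd : Odd (orderOf y)) :
    IsTet G x y ∧ orderOf y = 3 ∧ Nat.card G = 12 ∧
      4 * orderOf y ^ 2 = 3 * Nat.card G := by
  obtain ⟨σ, hσx, hσy⟩ := hrefl
  obtain ⟨hs1, hs2⟩ := hsimple
  obtain ⟨t, htdef⟩ : ∃ t, t = x * y := ⟨_, rfl⟩
  have ht : t * t = 1 := by rw [htdef, ← pow_two, hxy]
  have hti : t⁻¹ = t := by rw [inv_eq_iff_mul_eq_one, ht]
  have htY : t ∉ Subgroup.zpowers y := by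
    intro h
    apply hs1 1
    rw [QuotientGroup.eq]
    simpa [htdef] using h
  have hI : ∀ z ∈ Subgroup.zpowers y, t⁻¹ * z * t ∈ Subgroup.zpowers y → z = 1 := by
    intro z hz h
    have e1 : (QuotientGroup.mk 1 : Vertex y) = QuotientGroup.mk z := by
      rw [QuotientGroup.eq]; simpa using hz
    have e2 : (QuotientGroup.mk (1 * x * y) : Vertex y) = QuotientGroup.mk (z * x * y) := by
      rw [QuotientGroup.eq]
      have : (1 * x * y)⁻¹ * (z * x * y) = t⁻¹ * z * t := by rw [htdef]; group
      rw [this]; exact h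
    have := hs2 1 z (by rw [e1, e2])
    rw [QuotientGroup.eq, ← htdef] at this
    obtain ⟨k, hk⟩ := Subgroup.mem_zpowers_iff.mp this
    have ht2 : t ^ (2 : ℤ) = 1 := by rw [zpow_two, ht]
    simp only [inv_one, one_mul] at hk
    rcases Int.even_or_odd' k with ⟨m, rfl | rfl⟩
    · rw [← hk, zpow_mul, ht2, one_zpow]
    · rw [zpow_add, zpow_mul, ht2, one_zpow, one_mul, zpow_one] at hk
      exact absurd (hk ▸ hz) htY
  have hx : x = t * y⁻¹ := by rw [htdef]; group
  have hσt : σ t = y * t * y⁻¹ := by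
    rw [htdef, map_mul, hσx, hσy]
    calc x⁻¹ * y⁻¹ = y * (x * y)⁻¹ * y⁻¹ := by group
      _ = _ := by rw [← htdef, hti]
  let τ : G ≃* G := σ.trans (MulAut.conj y⁻¹)
  have hτy : τ y = y⁻¹ := by simp [τ, hσy]
  have hτt : τ t = t := by simp [τ, hσt, mul_assoc]
  obtain ⟨hy3, hrel⟩ := aux_core y t ht hI τ hτy hτt hden hodd
  have ht1 : t ≠ 1 := fun h => htY (h ▸ one_mem _)
  have hy1 : y ≠ 1 := by
    rintro rfl
    simp at hden
    have : Nat.card G = 1 := by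
      have : 0 < Nat.card G := Nat.card_pos
      omega
    have := (Nat.card_eq_one_iff_unique.mp this).1
    exact ht1 (Subsingleton.elim _ _)
  have hq : orderOf y = 3 := orderOf_eq_prime hy3 hy1
  have ht2 : orderOf t = 2 := orderOf_eq_prime (by rw [pow_two, ht]) ht1
  have hgen' : Subgroup.closure {y, t} = ⊤ := by
    rw [eq_top_iff, ← hgen, Subgroup.closure_le]
    have hy : y ∈ Subgroup.closure {y, t} := Subgroup.subset_closure (by simp)
    have ht' : t ∈ Subgroup.closure {y, t} := Subgroup.subset_closure (by simp)
    rintro a (rfl | rfl)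
    · rw [hx]; exact mul_mem ht' (inv_mem hy)
    · exact hy
  have hle := (aux_P G y t ht hy3 hrel hgen').2
  have hge : 9 ≤ Nat.card G := by
    have := Nat.card_le_card_of_injective _ (aux_inj_s9 y t hI)
    rw [Nat.card_prod, Nat.card_zpowers, hq] at this
    exact this
  have hd3 : 3 ∣ Nat.card G := hq ▸ orderOf_dvd_natCard y
  have hd2 : 2 ∣ Nat.card G := ht2 ▸ orderOf_dvd_natCard t
  have hcard : Nat.card G = 12 := by omega
  refine ⟨?_, hq, hcard, by rw [hq, hcard]; norm_num⟩
  have hx3 : x ^ 3 = 1 := by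
    have : t * y * t = y⁻¹ * t * y⁻¹ := hrel
    have hxi : x⁻¹ = y * t := by rw [hx, mul_inv_rev, inv_inv, hti]
    have : x⁻¹ ^ 3 = 1 := by
      rw [hxi]
      calc (y * t) ^ 3 = y * (t * y * t) * (y * t) := by simp only [pow_succ, pow_zero, one_mul, mul_assoc]
        _ = y * (y⁻¹ * t * y⁻¹) * (y * t) := by rw [hrel]
        _ = t * t := by group
        _ = 1 := ht
    simpa using this
  let f : Fin 2 → G := ![x, y]
  have hf : ∀ r ∈ tetRels, FreeGroup.lift f r = 1 := by
    rintro r (rfl | rfl | rfl)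
    · simpa [f] using hx3
    · simpa [f] using hy3
    · simpa [f] using hxy
  let φ := PresentedGroup.toGroup hf
  have hφ0 : φ (PresentedGroup.of 0) = x := PresentedGroup.toGroup.of hf
  have hφ1 : φ (PresentedGroup.of 1) = y := PresentedGroup.toGroup.of hf
  have hφs : Function.Surjective φ := by
    rw [← MonoidHom.range_eq_top, eq_top_iff, ← hgen, Subgroup.closure_le]
    rintro a (rfl | rfl)
    · exact ⟨_, hφ0⟩
    · exact ⟨_, hφ1⟩
  obtain ⟨X, hX⟩ : ∃ X : PresentedGroup tetRels, X = PresentedGroup.of 0 := ⟨_, rfl⟩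
  obtain ⟨Y, hY⟩ : ∃ Y : PresentedGroup tetRels, Y = PresentedGroup.of 1 := ⟨_, rfl⟩
  have rX : X ^ 3 = 1 := by
    rw [hX]
    exact PresentedGroup.one_of_mem (rels := tetRels) (x := FreeGroup.of 0 ^ 3) (by simp [tetRels])
  have rY : Y ^ 3 = 1 := by
    rw [hY]
    exact PresentedGroup.one_of_mem (rels := tetRels) (x := FreeGroup.of 1 ^ 3) (by simp [tetRels])
  have rXY : (X * Y) ^ 2 = 1 := by
    rw [hX, hY]
    exact PresentedGroup.one_of_mem (rels := tetRels)
      (x := (FreeGroup.of 0 * FreeGroup.of 1) ^ 2) (by simp [tetRels])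
  have rXY' : (X * Y) * (X * Y) = 1 := by rw [← pow_two, rXY]
  have rXYi : (X * Y)⁻¹ = X * Y := by rw [inv_eq_iff_mul_eq_one, rXY']
  have hPrel : (X * Y) * Y * (X * Y) = Y⁻¹ * (X * Y) * Y⁻¹ := by
    have hXi : X⁻¹ = Y * (X * Y) := by
      calc X⁻¹ = Y * (X * Y)⁻¹ := by group
        _ = _ := by rw [rXYi]
    calc (X * Y) * Y * (X * Y) = X * Y * (Y * (X * Y)) := by group
      _ = X * Y * X⁻¹ := by rw [hXi]
      _ = Y⁻¹ * (Y * (X * Y)) * X⁻¹ := by group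
      _ = Y⁻¹ * X⁻¹ * X⁻¹ := by rw [← hXi]
      _ = Y⁻¹ * X * (X ^ 3)⁻¹ := by group
      _ = Y⁻¹ * (X * Y) * Y⁻¹ := by rw [rX]; group
  have hPgen : Subgroup.closure {Y, X * Y} = ⊤ := by
    rw [eq_top_iff, ← PresentedGroup.closure_range_of, Subgroup.closure_le]
    have hy : Y ∈ Subgroup.closure {Y, X * Y} := Subgroup.subset_closure (by simp)
    have ht' : X * Y ∈ Subgroup.closure {Y, X * Y} := Subgroup.subset_closure (by simp)
    rintro a ⟨i, rfl⟩
    fin_cases i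
    · have : X = X * Y * Y⁻¹ := by group
      have h2 : X ∈ Subgroup.closure {Y, X * Y} := by
        rw [this]; simpa using mul_mem ht' (inv_mem hy)
      rw [hX] at h2 ⊢
      exact h2
    · rw [hY] at hy ⊢
      exact hy
  obtain ⟨hPfin, hPcard⟩ := aux_P _ Y (X * Y) rXY' rY hPrel hPgen
  have hbij : Function.Bijective φ := by
    rw [Nat.bijective_iff_surjective_and_card]
    exact ⟨hφs, le_antisymm (by omega) (Nat.card_le_card_of_surjective _ hφs)⟩
  exact ⟨MulEquiv.ofBijective φ hbij, hφ0, hφ1⟩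

end RegularMap
end
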